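/- arXiv:1308.6399 — 3 statements merged into one kernel-verified Lean document; each statement's English description precedes it below -/
import Mathlib

section
/- Let A ⊆ ℕ be c.e. and non-computable. Then there is a c.e. set C ⊆ A such that for every non-computable split X ⊑ A there is an infinite computable set T ⊆ X with T ∩ C non-computable. Moreover, this holds uniformly: there is a computable function g : ℕ → ℕ such that for every e, if Wₑ is a non-computable split of A, then the g(e)-th partial computable function is total and strictly increasing, its range T is contained in Wₑ, T is computable, and T ∩ C is non-computable. -/
/-- A set of natural numbers is computably enumerable if it is the domain of a
partial computable function. -/
def CE (A : Set ℕ) : Prop := ∃ f : ℕ →. ℕ, Partrec f ∧ A = f.Dom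

/-- A set of natural numbers is computable if its membership predicate is computable. -/
def IsComputableSet (A : Set ℕ) : Prop := ComputablePred (· ∈ A)

/-- `X ⊆* Y` : `X ∖ Y` is finite. -/
def SubsetStar (X Y : Set ℕ) : Prop := (X \ Y).Finite

/-- `X ⊑ A` : `X` is a split of the c.e. set `A`, i.e. `X` is c.e. and there is a
c.e. set `Y` with `X ∩ Y = ∅` and `X ∪ Y = A`. -/
def Split (A X : Set ℕ) : Prop := CE X ∧ ∃ Y : Set ℕ, CE Y ∧ X ∩ Y = ∅ ∧ X ∪ Y = A

/-- `B ⊂ₛ A` : `B` is a small subset of `A`. -/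
def SmallSubset (B A : Set ℕ) : Prop :=
  B ⊆ A ∧ ∀ U V : Set ℕ, CE U → CE V → SubsetStar (U ∩ (A \ B)) V → CE ((U \ A) ∪ V)

/-- `B ⊂ₘ A` : `B` is a major subset of `A`. -/
def MajorSubset (B A : Set ℕ) : Prop :=
  B ⊆ A ∧ (A \ B).Infinite ∧
    ∀ W : Set ℕ, CE W → A ∪ W = Set.univ → (Set.univ \ (B ∪ W)).Finite

/-- The `e`-th partial computable function, via the standard numbering by codes. -/
def phiFun (e : ℕ) : ℕ →. ℕ := (Denumerable.ofNat Nat.Partrec.Code e).eval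

/-- `W e` : the `e`-th c.e. set, the domain of the `e`-th partial computable
function. -/
def Wset (e : ℕ) : Set ℕ := (phiFun e).Dom

namespace SplitProof

open Nat.Partrec Encodable Denumerable

/-- Stage `s` approximation to the `e`-th c.e. set. -/
def Win (e s x : ℕ) : Prop := (Code.evaln s (ofNat Code e) x).isSome = true

theorem Win.mono {e s t x : ℕ} (h : Win e s x) (hst : s ≤ t) : Win e t x := by
  unfold Win at *
  rw [Option.isSome_iff_exists] at *
  obtain ⟨y, hy⟩ := h
  exact ⟨y, Code.evaln_mono hst hy⟩

theorem mem_Wset_iff {e x : ℕ} : x ∈ Wset e ↔ ∃ s, Win e s x := by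
  unfold Wset phiFun Win
  rw [PFun.mem_dom]
  constructor
  · rintro ⟨y, hy⟩
    obtain ⟨k, hk⟩ := Code.evaln_complete.1 hy
    exact ⟨k, Option.isSome_iff_exists.2 ⟨y, hk⟩⟩
  · rintro ⟨k, hk⟩
    obtain ⟨y, hy⟩ := Option.isSome_iff_exists.1 hk
    exact ⟨y, Code.evaln_sound hy⟩

theorem Win.bound {e s x : ℕ} (h : Win e s x) : x < s := by
  obtain ⟨y, hy⟩ := Option.isSome_iff_exists.1 h
  exact Code.evaln_bound hy

def dE (s : ℕ) : ℕ := s.unpair.1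
def dK (s : ℕ) : ℕ := s.unpair.2.unpair.1
def dX (s : ℕ) : ℕ := s.unpair.2.unpair.2.unpair.1

theorem exists_stage (e k x N : ℕ) : ∃ s, N ≤ s ∧ dE s = e ∧ dK s = k ∧ dX s = x := by
  refine ⟨Nat.pair e (Nat.pair k (Nat.pair x N)), ?_, ?_, ?_, ?_⟩
  · exact (Nat.right_le_pair _ _).trans ((Nat.right_le_pair _ _).trans (Nat.right_le_pair _ _))
  all_goals simp [dE, dK, dX]

abbrev TList := List (ℕ × ℕ × ℕ)
abbrev CList := List (ℕ × ℕ)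

/-- Condition for adding `x` as the `k`-th element of `T_e` at stage `s`. -/
def Tc (s : ℕ) (T : TList) (C : CList) : Prop :=
  Win (dE s) s (dX s) ∧ (∀ c ∈ C, c.2 ≠ dX s) ∧
    (∀ t ∈ T, t.1 = dE s → t.2.1 < dK s ∧ t.2.2 < dX s) ∧
    (dK s = 0 ∨ ∃ t ∈ T, t.1 = dE s ∧ t.2.1 + 1 = dK s)

/-- The pair coded by `p` covers the stage `x` part of `A` at stage `s`. -/
def Cov (a p x s : ℕ) : Prop :=
  ∀ y < x, ¬ Win a x y ∨ Win p.unpair.1 s y ∨ Win p.unpair.2 s y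

def Elig (a p x s : ℕ) (T : TList) : Prop :=
  (∃ t ∈ T, t.1 = p.unpair.1 ∧ x ≤ t.2.2) ∨ Win p.unpair.2 s x ∨ ¬ Cov a p x s

/-- Condition for requirement `n` to put `x` into `C` at stage `s`. -/
def Cc (a n x s : ℕ) (T : TList) (C : CList) : Prop :=
  (∃ t ∈ T, t.1 = n.unpair.1 ∧ t.2.2 = x) ∧ Win n.unpair.2 s x ∧ Win a s x ∧
    (∀ c ∈ C, c.1 ≠ n ∧ c.2 ≠ x) ∧
    (∀ t ∈ T, t.2.2 ≠ x ∨ n < t.1 ∨ 2 * n < t.2.1) ∧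
    ∀ p < n, Elig a p x s T

open Classical in
noncomputable def stepT (s : ℕ) (S : TList × CList) : TList :=
  if Tc s S.1 S.2 then (dE s, dK s, dX s) :: S.1 else S.1

open Classical in
noncomputable def stepC (a s : ℕ) (T : TList) (C : CList) : CList :=
  if Cc a (dE s) (dX s) s T C then (dE s, dX s) :: C else C

noncomputable def step (a s : ℕ) (S : TList × CList) : TList × CList :=
  (stepT s S, stepC a s (stepT s S) S.2)

noncomputable def st (a : ℕ) (s : ℕ) : TList × CList :=
  Nat.rec ([], []) (fun s S => step a s S) s

/-! Primitive recursiveness of the construction. -/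

section prim
variable {γ : Type*} [Primcodable γ]

theorem win_prim {f g h : γ → ℕ} (hf : Primrec f) (hg : Primrec g) (hh : Primrec h) :
    PrimrecPred fun c => Win (f c) (g c) (h c) := by
  have h1 : Primrec fun c => (Code.evaln (g c) (ofNat Code (f c)) (h c)).isSome :=
    Primrec.option_isSome.comp
      (Code.primrec_evaln.comp ((hg.pair ((Primrec.ofNat Code).comp hf)).pair hh))
  exact Primrec.eq.comp h1 (Primrec.const true)

theorem ex_list {α : Type*} [Primcodable α] {f : γ → List α} {R : α → γ → Prop} (hf : Primrec f)
    (hR : PrimrecRel R) : PrimrecPred fun c => ∃ a ∈ f c, R a c :=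
  (PrimrecRel.exists_mem_list hR).comp hf Primrec.id

theorem all_list {α : Type*} [Primcodable α] {f : γ → List α} {R : α → γ → Prop} (hf : Primrec f)
    (hR : PrimrecRel R) : PrimrecPred fun c => ∀ a ∈ f c, R a c :=
  (PrimrecRel.forall_mem_list hR).comp hf Primrec.id

theorem all_lt {f : γ → ℕ} {R : ℕ → γ → Prop} (hf : Primrec f)
    (hR : PrimrecRel R) : PrimrecPred fun c => ∀ a < f c, R a c :=
  (all_list (Primrec.list_range.comp hf) hR).of_eq fun c => by simp

theorem dE_prim : Primrec dE := Primrec.fst.comp Primrec.unpair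
theorem dK_prim : Primrec dK :=
  Primrec.fst.comp (Primrec.unpair.comp (Primrec.snd.comp Primrec.unpair))
theorem dX_prim : Primrec dX :=
  Primrec.fst.comp (Primrec.unpair.comp
    (Primrec.snd.comp (Primrec.unpair.comp (Primrec.snd.comp Primrec.unpair))))

theorem imp_prim {p q : γ → Prop} (hp : PrimrecPred p) (hq : PrimrecPred q) :
    PrimrecPred fun c => p c → q c :=
  (hp.not.or hq).of_eq fun c => by tauto

theorem up1 {f : γ → ℕ} (hf : Primrec f) : Primrec fun c => (f c).unpair.1 :=
  Primrec.fst.comp (Primrec.unpair.comp hf)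
theorem up2 {f : γ → ℕ} (hf : Primrec f) : Primrec fun c => (f c).unpair.2 :=
  Primrec.snd.comp (Primrec.unpair.comp hf)

theorem Tc_prim {f : γ → ℕ} {T : γ → TList} {C : γ → CList} (hf : Primrec f) (hT : Primrec T)
    (hC : Primrec C) : PrimrecPred fun c => Tc (f c) (T c) (C c) := by
  have hE := dE_prim.comp hf
  have hK := dK_prim.comp hf
  have hX := dX_prim.comp hf
  unfold Tc
  refine (win_prim hE hf hX).and (PrimrecPred.and ?_ (PrimrecPred.and ?_ (PrimrecPred.or ?_ ?_)))
  · exact all_list (R := fun (x : ℕ × ℕ) c => x.2 ≠ dX (f c)) hC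
      (Primrec.eq.comp (Primrec.snd.comp Primrec.fst) (hX.comp Primrec.snd)).not
  · refine all_list (R := fun t c => t.1 = dE (f c) → t.2.1 < dK (f c) ∧ t.2.2 < dX (f c)) hT
      (imp_prim (Primrec.eq.comp (Primrec.fst.comp Primrec.fst) (hE.comp Primrec.snd))
        (PrimrecPred.and
          (Primrec.nat_lt.comp (Primrec.fst.comp (Primrec.snd.comp Primrec.fst))
            (hK.comp Primrec.snd))
          (Primrec.nat_lt.comp (Primrec.snd.comp (Primrec.snd.comp Primrec.fst))
            (hX.comp Primrec.snd))))
  · exact Primrec.eq.comp hK (Primrec.const 0)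
  · exact ex_list (R := fun t c => t.1 = dE (f c) ∧ t.2.1 + 1 = dK (f c)) hT
      (PrimrecPred.and (Primrec.eq.comp (Primrec.fst.comp Primrec.fst) (hE.comp Primrec.snd))
        (Primrec.eq.comp (Primrec.succ.comp (Primrec.fst.comp (Primrec.snd.comp Primrec.fst)))
            (hK.comp Primrec.snd)))

theorem Cov_prim (a : ℕ) {p x s : γ → ℕ} (hp : Primrec p) (hx : Primrec x) (hs : Primrec s) :
    PrimrecPred fun c => Cov a (p c) (x c) (s c) := by
  unfold Cov
  refine all_lt (R := fun y c => ¬ Win a (x c) y ∨ Win (p c).unpair.1 (s c) y ∨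
    Win (p c).unpair.2 (s c) y) hx ?_
  refine (win_prim (Primrec.const a) (hx.comp Primrec.snd) Primrec.fst).not.or
    ((win_prim (up1 (hp.comp Primrec.snd)) (hs.comp Primrec.snd) Primrec.fst).or
    (win_prim (up2 (hp.comp Primrec.snd)) (hs.comp Primrec.snd) Primrec.fst))

theorem Elig_prim (a : ℕ) {p x s : γ → ℕ} {T : γ → TList} (hp : Primrec p) (hx : Primrec x)
    (hs : Primrec s) (hT : Primrec T) :
    PrimrecPred fun c => Elig a (p c) (x c) (s c) (T c) := by
  unfold Elig
  refine PrimrecPred.or ?_ ((win_prim (up2 hp) hs hx).or (Cov_prim a hp hx hs).not)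
  exact ex_list (R := fun t c => t.1 = (p c).unpair.1 ∧ x c ≤ t.2.2) hT
    (PrimrecPred.and (Primrec.eq.comp (Primrec.fst.comp Primrec.fst) (up1 (hp.comp Primrec.snd)))
      (Primrec.nat_le.comp (hx.comp Primrec.snd)
        (Primrec.snd.comp (Primrec.snd.comp Primrec.fst))))

theorem Cc_prim (a : ℕ) {n x s : γ → ℕ} {T : γ → TList} {C : γ → CList} (hn : Primrec n)
    (hx : Primrec x) (hs : Primrec s) (hT : Primrec T) (hC : Primrec C) :
    PrimrecPred fun c => Cc a (n c) (x c) (s c) (T c) (C c) := by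
  unfold Cc
  have hn2 : Primrec fun c => 2 * n c := Primrec.nat_mul.comp (Primrec.const 2) hn
  refine PrimrecPred.and ?_ ((win_prim (up2 hn) hs hx).and
    ((win_prim (Primrec.const a) hs hx).and
      (PrimrecPred.and ?_ (PrimrecPred.and ?_ ?_))))
  · exact ex_list (R := fun t c => t.1 = (n c).unpair.1 ∧ t.2.2 = x c) hT
      (PrimrecPred.and (Primrec.eq.comp (Primrec.fst.comp Primrec.fst) (up1 (hn.comp Primrec.snd)))
        (Primrec.eq.comp (Primrec.snd.comp (Primrec.snd.comp Primrec.fst))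
          (hx.comp Primrec.snd)))
  · exact all_list (R := fun t c => t.1 ≠ n c ∧ t.2 ≠ x c) hC
      (PrimrecPred.and
        (Primrec.eq.comp (Primrec.fst.comp Primrec.fst) (hn.comp Primrec.snd)).not
        (Primrec.eq.comp (Primrec.snd.comp Primrec.fst) (hx.comp Primrec.snd)).not)
  · exact all_list (R := fun t c => t.2.2 ≠ x c ∨ n c < t.1 ∨ 2 * n c < t.2.1) hT
      (PrimrecPred.or
        (Primrec.eq.comp (Primrec.snd.comp (Primrec.snd.comp Primrec.fst))
          (hx.comp Primrec.snd)).not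
        (PrimrecPred.or
          (Primrec.nat_lt.comp (hn.comp Primrec.snd) (Primrec.fst.comp Primrec.fst))
          (Primrec.nat_lt.comp (hn2.comp Primrec.snd)
            (Primrec.fst.comp (Primrec.snd.comp Primrec.fst)))))
  · exact all_lt (R := fun p c => Elig a p (x c) (s c) (T c)) hn
      (Elig_prim a Primrec.fst (hx.comp Primrec.snd) (hs.comp Primrec.snd) (hT.comp Primrec.snd))

theorem stepT_prim : Primrec₂ stepT := by
  classical
  have hs : Primrec fun c : ℕ × (TList × CList) => c.1 := Primrec.fst
  have hT : Primrec fun c : ℕ × (TList × CList) => c.2.1 := Primrec.fst.comp Primrec.snd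
  have hC : Primrec fun c : ℕ × (TList × CList) => c.2.2 := Primrec.snd.comp Primrec.snd
  unfold stepT
  refine Primrec.ite (Tc_prim hs hT hC) ?_ hT
  exact Primrec.list_cons.comp
    ((dE_prim.comp hs).pair ((dK_prim.comp hs).pair (dX_prim.comp hs))) hT

theorem step_prim (a : ℕ) : Primrec₂ (step a) := by
  classical
  have hs : Primrec fun c : ℕ × (TList × CList) => c.1 := Primrec.fst
  have hC : Primrec fun c : ℕ × (TList × CList) => c.2.2 := Primrec.snd.comp Primrec.snd
  have hT : Primrec fun c : ℕ × (TList × CList) => stepT c.1 c.2 := stepT_prim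
  unfold step stepC
  refine Primrec.pair hT (Primrec.ite
    (Cc_prim a (dE_prim.comp hs) (dX_prim.comp hs) hs hT hC) ?_ hC)
  exact Primrec.list_cons.comp ((dE_prim.comp hs).pair (dX_prim.comp hs)) hC

theorem st_prim (a : ℕ) : Primrec (st a) := by
  unfold st
  exact Primrec.nat_rec' Primrec.id (Primrec.const ([], []))
    ((step_prim a).comp₂ (Primrec.fst.comp Primrec.snd).to₂ (Primrec.snd.comp Primrec.snd).to₂)

end prim

/-! Combinatorics of the construction. -/

structure Inv (a : ℕ) (T : TList) (C : CList) : Prop where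
  lt : ∀ e k x k' x', (e, k, x) ∈ T → (e, k', x') ∈ T → k < k' → x < x'
  eq : ∀ e k x x', (e, k, x) ∈ T → (e, k, x') ∈ T → x = x'
  prev : ∀ e k x, (e, k + 1, x) ∈ T → ∃ y, (e, k, y) ∈ T
  cn : ∀ n x x', (n, x) ∈ C → (n, x') ∈ C → x = x'
  cx : ∀ n n' x, (n, x) ∈ C → (n', x) ∈ C → n = n'
  res : ∀ e k n x, (e, k, x) ∈ T → (n, x) ∈ C → n < e ∨ 2 * n < k
  tW : ∀ e k x, (e, k, x) ∈ T → x ∈ Wset e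
  cA : ∀ n x, (n, x) ∈ C → x ∈ Wset a
  cW : ∀ n x, (n, x) ∈ C → x ∈ Wset n.unpair.2
  cT : ∀ n x, (n, x) ∈ C → ∃ k, (n.unpair.1, k, x) ∈ T

theorem Inv.stepT {a s : ℕ} {T : TList} {C : CList} (h : Inv a T C) (hc : Tc s T C) :
    Inv a ((dE s, dK s, dX s) :: T) C := by
  obtain ⟨h1, h2, h3, h4⟩ := hc
  have h1' : dX s ∈ Wset (dE s) := mem_Wset_iff.2 ⟨s, h1⟩
  have h3' : ∀ k x, (dE s, k, x) ∈ T → k < dK s ∧ x < dX s := fun k x hm => h3 _ hm rfl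
  have h2' : ∀ n, (n, dX s) ∉ C := fun n hm => h2 _ hm rfl
  have h4' : dK s = 0 ∨ ∃ k x, (dE s, k, x) ∈ T ∧ k + 1 = dK s := by
    rcases h4 with h | ⟨⟨e, k, x⟩, h, he, hk⟩
    · exact Or.inl h
    · simp only at he hk
      subst he
      exact Or.inr ⟨k, x, h, hk⟩
  clear h1 h2 h3 h4
  obtain ⟨i1, i2, i3, i4, i5, i6, i7, i8, i9, i10⟩ := h
  generalize dE s = E at *
  generalize dK s = K at *
  generalize dX s = X at *
  refine ⟨?_, ?_, ?_, i4, i5, ?_, ?_, i8, i9, ?_⟩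
  · intro e k x k' x' hm hm' hlt
    simp only [List.mem_cons, Prod.mk.injEq] at hm hm'
    rcases hm with ⟨he, hk, hx⟩ | hm <;> rcases hm' with ⟨he', hk', hx'⟩ | hm'
    · omega
    · rw [he] at hm'
      have := h3' _ _ hm'
      omega
    · rw [he'] at hm
      have := h3' _ _ hm
      omega
    · exact i1 _ _ _ _ _ hm hm' hlt
  · intro e k x x' hm hm'
    simp only [List.mem_cons, Prod.mk.injEq] at hm hm'
    rcases hm with ⟨he, hk, hx⟩ | hm <;> rcases hm' with ⟨he', hk', hx'⟩ | hm'
    · omega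
    · rw [he] at hm'
      have := h3' _ _ hm'
      omega
    · rw [he'] at hm
      have := h3' _ _ hm
      omega
    · exact i2 _ _ _ _ hm hm'
  · intro e k x hm
    simp only [List.mem_cons, Prod.mk.injEq] at hm
    rcases hm with ⟨he, hk, hx⟩ | hm
    · rcases h4' with h | ⟨k1, y, hy, hk1⟩
      · omega
      · obtain rfl : k1 = k := by omega
        rw [he]
        exact ⟨y, List.mem_cons_of_mem _ hy⟩
    · obtain ⟨y, hy⟩ := i3 _ _ _ hm
      exact ⟨y, List.mem_cons_of_mem _ hy⟩
  · intro e k n x hm hm'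
    simp only [List.mem_cons, Prod.mk.injEq] at hm
    rcases hm with ⟨he, hk, hx⟩ | hm
    · rw [hx] at hm'
      exact absurd hm' (h2' n)
    · exact i6 _ _ _ _ hm hm'
  · intro e k x hm
    simp only [List.mem_cons, Prod.mk.injEq] at hm
    rcases hm with ⟨he, hk, hx⟩ | hm
    · rw [he, hx]
      exact h1'
    · exact i7 _ _ _ hm
  · intro n x hm
    obtain ⟨k, hk⟩ := i10 n x hm
    exact ⟨k, List.mem_cons_of_mem _ hk⟩

theorem Inv.stepC {a n x s : ℕ} {T : TList} {C : CList} (h : Inv a T C) (hc : Cc a n x s T C) :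
    Inv a T ((n, x) :: C) := by
  obtain ⟨⟨⟨e, k, y⟩, h1, he, hy⟩, h2, h3, h4, h5, -⟩ := hc
  simp only at he hy
  subst he hy
  have h2' : y ∈ Wset n.unpair.2 := mem_Wset_iff.2 ⟨s, h2⟩
  have h3' : y ∈ Wset a := mem_Wset_iff.2 ⟨s, h3⟩
  have h4' : ∀ m z, (m, z) ∈ C → m ≠ n ∧ z ≠ y := fun m z hm => h4 _ hm
  have h5' : ∀ e k, (e, k, y) ∈ T → n < e ∨ 2 * n < k := fun e k hm => by
    simpa using h5 _ hm
  clear h2 h3 h4 h5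
  obtain ⟨i1, i2, i3, i4, i5, i6, i7, i8, i9, i10⟩ := h
  refine ⟨i1, i2, i3, ?_, ?_, ?_, i7, ?_, ?_, ?_⟩
  · intro m z z' hm hm'
    simp only [List.mem_cons, Prod.mk.injEq] at hm hm'
    rcases hm with ⟨e1, e2⟩ | hm <;> rcases hm' with ⟨e3, e4⟩ | hm'
    · omega
    · exact absurd e1 (h4' _ _ hm').1
    · exact absurd e3 (h4' _ _ hm).1
    · exact i4 _ _ _ hm hm'
  · intro m m' z hm hm'
    simp only [List.mem_cons, Prod.mk.injEq] at hm hm'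
    rcases hm with ⟨e1, e2⟩ | hm <;> rcases hm' with ⟨e3, e4⟩ | hm'
    · omega
    · exact absurd e2 (h4' _ _ hm').2
    · exact absurd e4 (h4' _ _ hm).2
    · exact i5 _ _ _ hm hm'
  · intro e k m z hm hm'
    simp only [List.mem_cons, Prod.mk.injEq] at hm'
    rcases hm' with ⟨e1, e2⟩ | hm'
    · rw [e2] at hm
      rw [e1]
      exact h5' _ _ hm
    · exact i6 _ _ _ _ hm hm'
  · intro m z hm
    simp only [List.mem_cons, Prod.mk.injEq] at hm
    rcases hm with ⟨e1, e2⟩ | hm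
    · rw [e2]
      exact h3'
    · exact i8 _ _ hm
  · intro m z hm
    simp only [List.mem_cons, Prod.mk.injEq] at hm
    rcases hm with ⟨e1, e2⟩ | hm
    · rw [e1, e2]
      exact h2'
    · exact i9 _ _ hm
  · intro m z hm
    simp only [List.mem_cons, Prod.mk.injEq] at hm
    rcases hm with ⟨e1, e2⟩ | hm
    · rw [e1, e2]
      exact ⟨_, h1⟩
    · exact i10 _ _ hm

theorem st_succ (a s : ℕ) : st a (s + 1) = step a s (st a s) := rfl

theorem inv_st (a s : ℕ) : Inv a (st a s).1 (st a s).2 := by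
  induction s with
  | zero => constructor <;> simp [st]
  | succ s ih =>
    rw [st_succ]
    have h1 : Inv a (stepT s (st a s)) (st a s).2 := by
      unfold SplitProof.stepT
      split_ifs with h
      · exact ih.stepT h
      · exact ih
    show Inv a (stepT s (st a s)) (stepC a s (stepT s (st a s)) (st a s).2)
    unfold SplitProof.stepC
    split_ifs with h
    · exact h1.stepC h
    · exact h1

theorem T_mono {a s s' : ℕ} (hs : s ≤ s') {t} (h : t ∈ (st a s).1) : t ∈ (st a s').1 := by
  induction s', hs using Nat.le_induction with
  | base => exact h
  | succ s' _ ih =>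
    show t ∈ stepT s' (st a s')
    unfold stepT
    split_ifs
    · exact List.mem_cons_of_mem _ ih
    · exact ih

theorem C_mono {a s s' : ℕ} (hs : s ≤ s') {t} (h : t ∈ (st a s).2) : t ∈ (st a s').2 := by
  induction s', hs using Nat.le_induction with
  | base => exact h
  | succ s' _ ih =>
    show t ∈ stepC a s' _ (st a s').2
    unfold stepC
    split_ifs
    · exact List.mem_cons_of_mem _ ih
    · exact ih

/-- `x` is the `k`-th element of `T_e`. -/
def Tm (a e k x : ℕ) : Prop := ∃ s, (e, k, x) ∈ (st a s).1
/-- requirement `n` puts `x` into `C`. -/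
def Cm (a n x : ℕ) : Prop := ∃ s, (n, x) ∈ (st a s).2
def Cset (a : ℕ) : Set ℕ := {x | ∃ n, Cm a n x}

theorem Tm_add {a s : ℕ} (h : Tc s (st a s).1 (st a s).2) : Tm a (dE s) (dK s) (dX s) := by
  refine ⟨s + 1, ?_⟩
  show _ ∈ stepT s (st a s)
  simp [stepT, h]

theorem Cm_add {a s : ℕ} (h : Cc a (dE s) (dX s) s (st a (s + 1)).1 (st a s).2) :
    Cm a (dE s) (dX s) := by
  refine ⟨s + 1, ?_⟩
  have h' : Cc a (dE s) (dX s) s (stepT s (st a s)) (st a s).2 := h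
  show _ ∈ stepC a s (stepT s (st a s)) (st a s).2
  unfold stepC
  rw [if_pos h']
  simp

theorem C_entry {a n x s : ℕ} (h : (n, x) ∈ (st a s).2) :
    ∃ t, (n, x) ∈ (st a (t + 1)).2 ∧ Cc a n x t (st a (t + 1)).1 (st a t).2 := by
  induction s with
  | zero => simp [st] at h
  | succ s ih =>
    by_cases hm : (n, x) ∈ (st a s).2
    · exact ih hm
    · refine ⟨s, h, ?_⟩
      have h' : (n, x) ∈ stepC a s (stepT s (st a s)) (st a s).2 := h
      unfold stepC at h'
      split_ifs at h' with hc
      · simp only [List.mem_cons, Prod.mk.injEq] at h'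
        rcases h' with ⟨h1, h2⟩ | h'
        · rw [h1, h2]
          exact hc
        · exact absurd h' hm
      · exact absurd h' hm

theorem Tm.lt {a e k x k' x' : ℕ} (h : Tm a e k x) (h' : Tm a e k' x') (hk : k < k') : x < x' := by
  obtain ⟨s, h⟩ := h
  obtain ⟨s', h'⟩ := h'
  exact (inv_st a (max s s')).lt e k x k' x' (T_mono (le_max_left _ _) h)
    (T_mono (le_max_right _ _) h') hk

theorem Tm.eq {a e k x x' : ℕ} (h : Tm a e k x) (h' : Tm a e k x') : x = x' := by
  obtain ⟨s, h⟩ := h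
  obtain ⟨s', h'⟩ := h'
  exact (inv_st a (max s s')).eq e k x x' (T_mono (le_max_left _ _) h)
    (T_mono (le_max_right _ _) h')

theorem Tm.down {a e k x : ℕ} (h : Tm a e k x) {k' : ℕ} (hk : k' ≤ k) : ∃ y, Tm a e k' y := by
  induction k generalizing x with
  | zero =>
    obtain rfl : k' = 0 := by omega
    exact ⟨x, h⟩
  | succ k ih =>
    rcases Nat.lt_or_ge k k' with h1 | h1
    · obtain rfl : k' = k + 1 := by omega
      exact ⟨x, h⟩
    · obtain ⟨s, hs⟩ := h
      obtain ⟨y, hy⟩ := (inv_st a s).prev e k x hs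
      exact ih ⟨s, hy⟩ h1

theorem Cm.n_eq {a n n' x : ℕ} (h : Cm a n x) (h' : Cm a n' x) : n = n' := by
  obtain ⟨s, h⟩ := h
  obtain ⟨s', h'⟩ := h'
  exact (inv_st a (max s s')).cx n n' x (C_mono (le_max_left _ _) h)
    (C_mono (le_max_right _ _) h')

theorem Cm.x_eq {a n x x' : ℕ} (h : Cm a n x) (h' : Cm a n x') : x = x' := by
  obtain ⟨s, h⟩ := h
  obtain ⟨s', h'⟩ := h'
  exact (inv_st a (max s s')).cn n x x' (C_mono (le_max_left _ _) h)
    (C_mono (le_max_right _ _) h')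

theorem res {a e k n x : ℕ} (h : Tm a e k x) (h' : Cm a n x) : n < e ∨ 2 * n < k := by
  obtain ⟨s, h⟩ := h
  obtain ⟨s', h'⟩ := h'
  exact (inv_st a (max s s')).res e k n x (T_mono (le_max_left _ _) h)
    (C_mono (le_max_right _ _) h')

theorem Tm.mem {a e k x : ℕ} (h : Tm a e k x) : x ∈ Wset e := by
  obtain ⟨s, h⟩ := h
  exact (inv_st a s).tW _ _ _ h

theorem Cset_subset (a : ℕ) : Cset a ⊆ Wset a := by
  rintro x ⟨n, s, h⟩
  exact (inv_st a s).cA _ _ h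

/-- Lemma A. -/
theorem lemmaA {a e x : ℕ} (hx : x ∈ Wset e) (hC : x ∉ Cset a) : ∃ k y, Tm a e k y ∧ x ≤ y := by
  by_contra! hcon
  have key : ∀ k, ∃ y, Tm a e k y := by
    intro k
    induction k using Nat.strong_induction_on with
    | _ k ih =>
      by_contra hk
      have hprev : k = 0 ∨ ∃ k' y s, k' + 1 = k ∧ (e, k', y) ∈ (st a s).1 := by
        rcases k with _ | k
        · exact Or.inl rfl
        · obtain ⟨y, s, hy⟩ := ih k (Nat.lt_succ_self k)
          exact Or.inr ⟨k, y, s, rfl, hy⟩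
      obtain ⟨N, hN⟩ : ∃ N, k = 0 ∨ ∃ k' y, k' + 1 = k ∧ (e, k', y) ∈ (st a N).1 := by
        rcases hprev with h | ⟨k', y, s, h1, h2⟩
        · exact ⟨0, Or.inl h⟩
        · exact ⟨s, Or.inr ⟨k', y, h1, h2⟩⟩
      obtain ⟨M, hM⟩ := mem_Wset_iff.1 hx
      obtain ⟨s, hs, hE, hK, hX⟩ := exists_stage e k x (max N M)
      have hc : Tc s (st a s).1 (st a s).2 := by
        unfold Tc
        rw [hE, hK, hX]
        refine ⟨hM.mono ((le_max_right _ _).trans hs), ?_, ?_, ?_⟩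
        · rintro ⟨n, z⟩ hz rfl
          exact hC ⟨n, s, hz⟩
        · rintro ⟨e', k', y⟩ ht he
          simp only at he ⊢
          subst he
          refine ⟨?_, hcon k' y ⟨s, ht⟩⟩
          by_contra hkk
          exact hk (Tm.down ⟨s, ht⟩ (not_lt.1 hkk))
        · rcases hN with h | ⟨k', y, h1, h2⟩
          · exact Or.inl h
          · exact Or.inr ⟨_, T_mono ((le_max_left _ _).trans hs) h2, rfl, h1⟩
      have := Tm_add hc
      rw [hE, hK, hX] at this
      exact hk ⟨x, this⟩
  choose b hb using key
  have hmono : StrictMono b := fun i j hij => (hb i).lt (hb j) hij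
  exact absurd (hcon x (b x) (hb x)) (not_lt.2 hmono.le_apply)

theorem T_diff_infinite {a e : ℕ} {b : ℕ → ℕ} (hb : ∀ k, Tm a e k (b k)) :
    (Set.range b \ Cset a).Infinite := by
  classical
  have hmono : StrictMono b := fun i j hij => (hb i).lt (hb j) hij
  intro hfin
  have hfin' : {k | b k ∉ Cset a}.Finite := by
    refine (hfin.preimage (f := b) hmono.injective.injOn).subset ?_
    intro k hk
    exact ⟨⟨k, rfl⟩, hk⟩
  set F := hfin'.toFinset with hF
  set N := F.card + e + 1 with hN
  have h1 : (Finset.range (2 * N) \ F).card ≤ (Finset.range N).card := by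
    have hc : ∀ k ∈ Finset.range (2 * N) \ F, ∃ n ∈ Finset.range N, Cm a n (b k) := by
      intro k hk
      simp only [Finset.mem_sdiff, Finset.mem_range, hF, Set.Finite.mem_toFinset,
        Set.mem_setOf_eq, not_not] at hk
      obtain ⟨hk, n, hn⟩ := hk
      refine ⟨n, ?_, hn⟩
      rw [Finset.mem_range]
      rcases res (hb k) hn with h | h <;> omega
    choose! f hf1 hf2 using hc
    refine Finset.card_le_card_of_injOn f hf1 ?_
    intro k hk k' hk' hkk
    have e1 := hf2 k hk
    have e2 := hf2 k' hk'
    rw [hkk] at e1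
    exact hmono.injective (e1.x_eq e2)
  have h2 := Finset.le_card_sdiff F (Finset.range (2 * N))
  simp only [Finset.card_range] at h1 h2
  omega

/-- Requirement `n` is satisfied. -/
theorem require {a e i : ℕ} {b : ℕ → ℕ} (hb : ∀ k, Tm a e k (b k)) (he : Wset e ⊆ Wset a) :
    ∃ x ∈ Set.range b, ¬ (x ∈ Wset i ↔ x ∉ Cset a) := by
  by_contra! hcon
  have hinf := T_diff_infinite hb
  set n := Nat.pair e i with hn
  -- `n` never acts
  have hno : ∀ x, ¬ Cm a n x := by
    rintro x ⟨s, hs⟩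
    have h1 := (inv_st a s).cW _ _ hs
    obtain ⟨k, h2⟩ := (inv_st a s).cT _ _ hs
    rw [hn, Nat.unpair_pair] at h1 h2
    have h3 : x = b k := Tm.eq ⟨s, h2⟩ (hb k)
    exact (hcon x ⟨k, h3.symm⟩).1 h1 ⟨n, s, hs⟩
  -- protected elements are finite in number
  have hfin : {x | ∃ e' k', Tm a e' k' x ∧ ¬ (n < e' ∨ 2 * n < k')}.Finite := by
    have : {x | ∃ e' k', Tm a e' k' x ∧ ¬ (n < e' ∨ 2 * n < k')} ⊆
        ⋃ q ∈ (Finset.range (n + 1) ×ˢ Finset.range (2 * n + 1)), {x | Tm a q.1 q.2 x} := by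
      rintro x ⟨e', k', h, h'⟩
      simp only [Set.mem_iUnion]
      refine ⟨(e', k'), ?_, h⟩
      simp only [Finset.mem_product, Finset.mem_range]
      omega
    refine Set.Finite.subset ?_ this
    refine Set.Finite.biUnion (Finset.finite_toSet _) ?_
    intro q _
    exact Set.Subsingleton.finite fun x hx y hy => Tm.eq hx hy
  -- eligibility bounds
  have hbd : ∀ p, ∃ L, ∀ x, x ∈ Wset a → x ∉ Cset a → L ≤ x →
      ∃ s0, ∀ s ≥ s0, Elig a p x s (st a (s + 1)).1 := by
    intro p
    by_cases hp : Wset a ⊆ Wset p.unpair.1 ∪ Wset p.unpair.2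
    · refine ⟨0, fun x hx hxC _ => ?_⟩
      rcases hp hx with h | h
      · obtain ⟨k, y, ⟨s, hs⟩, hxy⟩ := lemmaA h hxC
        exact ⟨s, fun s' hs' => Or.inl ⟨_, T_mono (by omega) hs, rfl, hxy⟩⟩
      · obtain ⟨s, hs⟩ := mem_Wset_iff.1 h
        exact ⟨s, fun s' hs' => Or.inr (Or.inl (hs.mono hs'))⟩
    · obtain ⟨y, hy, hy'⟩ := Set.not_subset.1 hp
      obtain ⟨L, hL⟩ := mem_Wset_iff.1 hy
      refine ⟨L, fun x _ _ hx => ⟨0, fun s _ => Or.inr (Or.inr fun hcov => ?_)⟩⟩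
      rcases hcov y (hL.bound.trans_le hx) with h | h | h
      · exact h (hL.mono hx)
      · exact hy' (Or.inl (mem_Wset_iff.2 ⟨_, h⟩))
      · exact hy' (Or.inr (mem_Wset_iff.2 ⟨_, h⟩))
  choose L hL using hbd
  set B := (Finset.range n).sup L with hB
  obtain ⟨x, ⟨⟨hxT, hxC⟩, hx1⟩, hxB⟩ := (hinf.diff hfin).exists_gt B
  obtain ⟨k, rfl⟩ := hxT
  have hxA : b k ∈ Wset a := he (hb k).mem
  have hel : ∀ p, p < n → ∃ s0, ∀ s ≥ s0, Elig a p (b k) s (st a (s + 1)).1 := fun p hp =>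
    hL p (b k) hxA hxC ((Finset.le_sup (f := L) (Finset.mem_range.2 hp)).trans hxB.le)
  choose! S hS using hel
  obtain ⟨s1, hs1⟩ := hb k
  obtain ⟨s2, hs2⟩ := mem_Wset_iff.1 hxA
  obtain ⟨s3, hs3⟩ := mem_Wset_iff.1 ((hcon (b k) ⟨k, rfl⟩).2 hxC)
  obtain ⟨s, hs, hE, -, hX⟩ := exists_stage n 0 (b k) (s1 + s2 + s3 + (Finset.range n).sup S)
  refine hno (b k) ?_
  rw [← hE, ← hX]
  apply Cm_add
  rw [hE, hX]
  refine ⟨⟨_, T_mono (by omega) hs1, by simp [hn], rfl⟩, ?_, hs2.mono (by omega), ?_, ?_, ?_⟩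
  · rw [hn, Nat.unpair_pair]
    exact hs3.mono (by omega)
  · rintro ⟨m, z⟩ hz
    constructor
    · rintro rfl
      exact hno z ⟨s, hz⟩
    · rintro rfl
      exact hxC ⟨m, s, hz⟩
  · rintro ⟨e', k', z⟩ hz
    by_contra hcon'
    push Not at hcon'
    apply hx1
    simp only at hcon'
    refine ⟨e', k', ⟨s + 1, ?_⟩, by omega⟩
    rw [← hcon'.1]
    exact hz
  · intro p hp
    refine hS p hp s ?_
    have := Finset.le_sup (f := S) (Finset.mem_range.2 hp)
    omega

/-! Computability facts. -/

theorem CE_iff_re {X : Set ℕ} : CE X ↔ REPred (· ∈ X) := by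
  constructor
  · rintro ⟨f, hf, rfl⟩
    exact hf.dom_re
  · intro h
    refine ⟨_, h.map (Computable.const (0 : ℕ)).to₂, ?_⟩
    ext x
    constructor
    · exact fun h => ⟨h, trivial⟩
    · rintro ⟨h, _⟩
      exact h

theorem CE.index {X : Set ℕ} (h : CE X) : ∃ e, Wset e = X := by
  obtain ⟨f, hf, rfl⟩ := h
  obtain ⟨c, hc⟩ := Code.exists_code.1 (Partrec.nat_iff.1 hf)
  refine ⟨encode c, ?_⟩
  unfold Wset phiFun
  rw [ofNat_encode, hc]

theorem Wset_CE (e : ℕ) : CE (Wset e) :=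
  ⟨phiFun e, Partrec.nat_iff.2 (Code.exists_code.2 ⟨_, rfl⟩), rfl⟩

theorem CE_ex {R : ℕ → ℕ → Prop} (hR : PrimrecRel R) : CE {x | ∃ s, R x s} := by
  classical
  refine ⟨fun x => Nat.rfind fun s => Part.some (decide (R x s)), ?_, ?_⟩
  · exact Partrec.rfind hR.decide.to_comp.partrec₂
  · ext x
    constructor
    · rintro ⟨s, hs⟩
      refine Part.dom_iff_mem.2 ?_
      obtain ⟨n, hn, -⟩ := Nat.rfind_min' (p := fun s => decide (R x s)) (m := s) (by simpa using hs)
      exact ⟨n, hn⟩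
    · intro h
      obtain ⟨s, hs⟩ := Part.dom_iff_mem.1 h
      have := Nat.rfind_spec hs
      refine ⟨s, ?_⟩
      simpa using this

theorem Cset_CE (a : ℕ) : CE (Cset a) := by
  have h := CE_ex (R := fun x s => ∃ c ∈ (st a s).2, c.2 = x)
    (ex_list (R := fun (c : ℕ × ℕ) (q : ℕ × ℕ) => c.2 = q.1)
      (Primrec.snd.comp ((st_prim a).comp Primrec.snd))
      (Primrec.eq.comp (Primrec.snd.comp Primrec.fst) (Primrec.fst.comp Primrec.snd)))
  convert h using 1
  ext x
  constructor
  · rintro ⟨n, s, hs⟩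
    exact ⟨s, _, hs, rfl⟩
  · rintro ⟨s, ⟨n, y⟩, hs, rfl⟩
    exact ⟨n, s, hs⟩

/-- Lemma B. -/
theorem lemmaB {a e d : ℕ} (hdis : Wset e ∩ Wset d = ∅) (hun : Wset e ∪ Wset d = Wset a)
    (hnt : ¬ ∀ k, ∃ x, Tm a e k x) : IsComputableSet (Wset e) := by
  classical
  push Not at hnt
  obtain ⟨k0, hk0⟩ := hnt
  set p := Nat.pair e d with hp
  have hdis' : ∀ x, x ∈ Wset e → x ∉ Wset d := fun x h1 h2 => by
    have : x ∈ Wset e ∩ Wset d := ⟨h1, h2⟩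
    rw [hdis] at this
    exact this
  have hkk : ∀ k x, Tm a e k x → k < k0 := by
    intro k x h
    by_contra hk
    obtain ⟨y, hy⟩ := h.down (not_lt.1 hk)
    exact hk0 y hy
  -- the finitely many exceptions
  have hF1 : {x | ∃ k, Tm a e k x}.Finite := by
    have : {x | ∃ k, Tm a e k x} ⊆ ⋃ k ∈ Finset.range k0, {x | Tm a e k x} := by
      rintro x ⟨k, h⟩
      simp only [Set.mem_iUnion]
      exact ⟨k, Finset.mem_range.2 (hkk k x h), h⟩
    refine Set.Finite.subset (Set.Finite.biUnion (Finset.finite_toSet _) ?_) this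
    intro q _
    exact Set.Subsingleton.finite fun x hx y hy => Tm.eq hx hy
  have hF2 : {x | ∃ n, n ≤ p ∧ Cm a n x}.Finite := by
    have : {x | ∃ n, n ≤ p ∧ Cm a n x} ⊆ ⋃ n ∈ Finset.range (p + 1), {x | Cm a n x} := by
      rintro x ⟨n, hn, h⟩
      simp only [Set.mem_iUnion]
      exact ⟨n, Finset.mem_range.2 (by omega), h⟩
    refine Set.Finite.subset (Set.Finite.biUnion (Finset.finite_toSet _) ?_) this
    intro q _
    exact Set.Subsingleton.finite fun x hx y hy => Cm.x_eq hx hy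
  obtain ⟨m1, hm1⟩ := hF1.bddAbove
  obtain ⟨m2, hm2⟩ := hF2.bddAbove
  set m := max m1 m2 with hm
  have hTm : ∀ k x, Tm a e k x → x ≤ m := fun k x h => (hm1 ⟨k, h⟩).trans (le_max_left _ _)
  have hCm : ∀ n x, Cm a n x → m < x → p < n := fun n x h hx => by
    by_contra hn
    exact absurd ((hm2 ⟨n, not_lt.1 hn, h⟩).trans (le_max_right _ _)) (not_le.2 hx)
  have hcov : ∀ x, ∃ s, Cov a p x s := by
    intro x
    have : ∀ y, ∃ s, y ∈ Wset a → Win e s y ∨ Win d s y := by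
      intro y
      by_cases hy : y ∈ Wset a
      · rw [← hun] at hy
        rcases hy with h | h
        · obtain ⟨s, hs⟩ := mem_Wset_iff.1 h
          exact ⟨s, fun _ => Or.inl hs⟩
        · obtain ⟨s, hs⟩ := mem_Wset_iff.1 h
          exact ⟨s, fun _ => Or.inr hs⟩
      · exact ⟨0, fun h => absurd h hy⟩
    choose S hS using this
    refine ⟨(Finset.range x).sup S, fun y hy => ?_⟩
    have hle := Finset.le_sup (f := S) (Finset.mem_range.2 hy)
    rw [hp, Nat.unpair_pair]
    by_cases hyA : Win a x y
    · refine Or.inr ?_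
      exact (hS y (mem_Wset_iff.2 ⟨_, hyA⟩)).imp (fun h => h.mono hle) (fun h => h.mono hle)
    · exact Or.inl hyA
  have key : ∀ x, m < x → (x ∉ Wset e ↔
      ∃ s, Win d s x ∨ (Cov a p x s ∧ ∀ c ∈ (st a s).2, c.2 ≠ x)) := by
    intro x hx
    constructor
    · intro hxe
      by_cases hxd : x ∈ Wset d
      · obtain ⟨s, hs⟩ := mem_Wset_iff.1 hxd
        exact ⟨s, Or.inl hs⟩
      · obtain ⟨s, hs⟩ := hcov x
        refine ⟨s, Or.inr ⟨hs, ?_⟩⟩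
        rintro ⟨n, y⟩ hc rfl
        have : y ∈ Wset a := Cset_subset a ⟨n, s, hc⟩
        rw [← hun] at this
        exact this.elim hxe hxd
    · rintro ⟨s, hs | ⟨hs, hc⟩⟩ hxe
      · exact hdis' x hxe (mem_Wset_iff.2 ⟨s, hs⟩)
      · have hxC : x ∈ Cset a := by
          by_contra hxC
          obtain ⟨k, y, h1, h2⟩ := lemmaA hxe hxC
          have := hTm k y h1
          omega
        obtain ⟨n, s', hn⟩ := hxC
        obtain ⟨t, ht, hcc⟩ := C_entry hn
        have hpn := hCm n x ⟨s', hn⟩ hx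
        rcases hcc.2.2.2.2.2 p hpn with ⟨⟨e', k', z⟩, h1, h2, h3⟩ | h | h
        · simp only [hp, Nat.unpair_pair] at h2 h3
          subst h2
          have := hTm k' z ⟨_, h1⟩
          omega
        · rw [hp, Nat.unpair_pair] at h
          exact hdis' x hxe (mem_Wset_iff.2 ⟨_, h⟩)
        · have hts : t < s := by
            by_contra hts
            apply h
            intro y hy
            exact (hs y hy).imp id (Or.imp (fun h => h.mono (not_lt.1 hts))
              (fun h => h.mono (not_lt.1 hts)))
          exact hc _ (C_mono hts ht) rfl
  set G : List ℕ := (List.range (m + 1)).filter fun x => decide (x ∉ Wset e) with hG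
  refine ComputablePred.computable_iff_re_compl_re'.2 ⟨CE_iff_re.1 (Wset_CE e), ?_⟩
  have hR : PrimrecRel fun x s => (∃ y ∈ G, y = x) ∨ (m < x ∧
      (Win d s x ∨ (Cov a p x s ∧ ∀ c ∈ (st a s).2, c.2 ≠ x))) := by
    refine PrimrecPred.or ?_ (PrimrecPred.and ?_ (PrimrecPred.or ?_ (PrimrecPred.and ?_ ?_)))
    · exact ex_list (R := fun (y : ℕ) (q : ℕ × ℕ) => y = q.1) (Primrec.const G)
        (Primrec.eq.comp Primrec.fst (Primrec.fst.comp Primrec.snd))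
    · exact Primrec.nat_lt.comp (Primrec.const m) Primrec.fst
    · exact win_prim (Primrec.const d) Primrec.snd Primrec.fst
    · exact Cov_prim a (Primrec.const p) Primrec.fst Primrec.snd
    · exact all_list (R := fun (c : ℕ × ℕ) (q : ℕ × ℕ) => c.2 ≠ q.1)
        (Primrec.snd.comp ((st_prim a).comp Primrec.snd))
        (Primrec.eq.comp (Primrec.snd.comp Primrec.fst) (Primrec.fst.comp Primrec.snd)).not
  refine (CE_iff_re.1 (CE_ex hR)).of_eq fun x => ?_
  show (∃ s, _) ↔ _
  by_cases hx : m < x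
  · rw [key x hx]
    constructor
    · rintro ⟨s, ⟨y, hy, rfl⟩ | ⟨_, h⟩⟩
      · simp [hG] at hy
        omega
      · exact ⟨s, h⟩
    · rintro ⟨s, h⟩
      exact ⟨s, Or.inr ⟨hx, h⟩⟩
  · constructor
    · rintro ⟨s, ⟨y, hy, rfl⟩ | ⟨h, _⟩⟩
      · simp [hG] at hy
        exact hy.2
      · exact absurd h hx
    · intro h
      refine ⟨0, Or.inl ⟨x, ?_, rfl⟩⟩
      simp [hG, h]
      omega

/-- The uniform function. -/
theorem exists_g (a : ℕ) : ∃ g : ℕ → ℕ, Computable g ∧ ∀ (e : ℕ) (b : ℕ → ℕ),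
    (∀ k, Tm a e k (b k)) → ∀ k, phiFun (g e) k = Part.some (b k) := by
  classical
  set f : ℕ → ℕ → Option ℕ := fun q m =>
    if ∃ t ∈ (st a m.unpair.1).1, t = (q.unpair.1, q.unpair.2, m.unpair.2)
      then some m.unpair.2 else none with hf
  have hfp : Primrec₂ f := by
    refine Primrec.ite ?_ (Primrec.option_some.comp (up2 Primrec.snd)) (Primrec.const none)
    exact ex_list (R := fun (t : ℕ × ℕ × ℕ) (q : ℕ × ℕ) =>
        t = (q.1.unpair.1, q.1.unpair.2, q.2.unpair.2))
      (Primrec.fst.comp ((st_prim a).comp (up1 Primrec.snd)))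
      (Primrec.eq.comp Primrec.fst
        ((up1 (Primrec.fst.comp Primrec.snd)).pair
          ((up2 (Primrec.fst.comp Primrec.snd)).pair (up2 (Primrec.snd.comp Primrec.snd)))))
  have hF : Partrec fun q => Nat.rfindOpt (f q) := Partrec.rfindOpt hfp.to_comp
  obtain ⟨c, hc⟩ := Code.exists_code.1 (Partrec.nat_iff.1 hF)
  refine ⟨fun e => encode (Code.curry c e), ?_, ?_⟩
  · exact (Primrec.encode.comp
      (Code.primrec₂_curry.comp (Primrec.const c) Primrec.id)).to_comp
  · intro e b hb k
    unfold phiFun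
    rw [ofNat_encode, Code.eval_curry, hc]
    have hspec : ∀ m y, y ∈ f (Nat.pair e k) m → Tm a e k y := by
      intro m y hy
      simp only [hf, Nat.unpair_pair] at hy
      split_ifs at hy with h
      · simp only [Option.mem_def, Option.some.injEq] at hy
        obtain ⟨t, ht, rfl⟩ := h
        rw [hy] at ht
        exact ⟨_, ht⟩
      · simp at hy
    obtain ⟨s, hs⟩ := hb k
    have hdom : (Nat.rfindOpt (f (Nat.pair e k))).Dom := by
      rw [Nat.rfindOpt_dom]
      refine ⟨Nat.pair s (b k), b k, ?_⟩
      simp only [hf, Nat.unpair_pair]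
      rw [if_pos ⟨_, hs, rfl⟩]
      rfl
    obtain ⟨y, hy⟩ := Part.dom_iff_mem.1 hdom
    obtain ⟨m, hm⟩ := Nat.rfindOpt_spec hy
    have := Tm.eq (hspec m y hm) ⟨s, hs⟩
    rw [this] at hy
    exact Part.eq_some_iff.2 hy

theorem range_computable {b : ℕ → ℕ} (hb : Computable b) (hmono : StrictMono b) :
    IsComputableSet (Set.range b) := by
  have h1 : Computable fun x => (Nat.rec false (fun k acc => acc || decide (b k = x)) (x + 1) : Bool) := by
    refine Computable.nat_rec (f := fun x : ℕ => x + 1) (g := fun _ => false)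
      (h := fun (x : ℕ) (q : ℕ × Bool) => q.2 || decide (b q.1 = x))
      Computable.succ (Computable.const false) ?_
    have h2 : Computable fun q : ℕ × ℕ × Bool => decide (b q.2.1 = q.1) :=
      Primrec.eq.decide.to_comp.comp (hb.comp (Computable.fst.comp Computable.snd)) Computable.fst
    exact Primrec.or.to_comp.comp (Computable.snd.comp Computable.snd) h2
  refine ComputablePred.computable_iff.2 ⟨_, h1, ?_⟩
  have h3 : ∀ x n, (Nat.rec false (fun k acc => acc || decide (b k = x)) n : Bool) = true ↔
      ∃ k < n, b k = x := by
    intro x n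
    induction n with
    | zero => simp
    | succ n ih =>
      simp only [Bool.or_eq_true, decide_eq_true_eq]
      rw [ih]
      constructor
      · rintro (⟨k, hk, h⟩ | h)
        · exact ⟨k, by omega, h⟩
        · exact ⟨n, by omega, h⟩
      · rintro ⟨k, hk, h⟩
        rcases Nat.lt_or_ge k n with h' | h'
        · exact Or.inl ⟨k, h', h⟩
        · obtain rfl : k = n := by omega
          exact Or.inr h
  funext x
  refine propext ?_
  refine Iff.trans ?_ (h3 x (x + 1)).symm
  constructor
  · rintro ⟨k, rfl⟩
    exact ⟨k, Nat.lt_succ_of_le hmono.le_apply, rfl⟩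
  · rintro ⟨k, -, h⟩
    exact ⟨k, h⟩

theorem main {a e : ℕ} {g : ℕ → ℕ}
    (hg : ∀ (e : ℕ) (b : ℕ → ℕ), (∀ k, Tm a e k (b k)) → ∀ k, phiFun (g e) k = Part.some (b k))
    (hs : Split (Wset a) (Wset e)) (hnc : ¬ IsComputableSet (Wset e)) :
    ∃ b : ℕ → ℕ, (∀ x : ℕ, phiFun (g e) x = Part.some (b x)) ∧
      StrictMono b ∧ Set.range b ⊆ Wset e ∧ IsComputableSet (Set.range b) ∧
      ¬ IsComputableSet (Set.range b ∩ Cset a) := by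
  obtain ⟨-, Y, hY, hdis, hun⟩ := hs
  obtain ⟨d, rfl⟩ := CE.index hY
  have htot : ∀ k, ∃ x, Tm a e k x := by
    by_contra h
    exact hnc (lemmaB hdis hun h)
  choose b hb using htot
  have hmono : StrictMono b := fun i j hij => (hb i).lt (hb j) hij
  have hgb := hg e b hb
  have hbc : Computable b := by
    have h1 : Partrec (phiFun (g e)) := Partrec.nat_iff.2 (Code.exists_code.2 ⟨_, rfl⟩)
    exact h1.of_eq hgb
  refine ⟨b, hgb, hmono, ?_, range_computable hbc hmono, ?_⟩
  · rintro _ ⟨k, rfl⟩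
    exact (hb k).mem
  · intro hcomp
    have h1 : CE (Set.range b ∩ Cset a)ᶜ := CE_iff_re.2 (ComputablePred.to_re hcomp.not)
    obtain ⟨i, hi⟩ := CE.index h1
    have hsub : Wset e ⊆ Wset a := hun ▸ Set.subset_union_left
    obtain ⟨x, hx, hx'⟩ := require (i := i) hb hsub
    apply hx'
    rw [hi]
    constructor
    · intro h1 h2
      exact h1 ⟨hx, h2⟩
    · intro h1 h2
      exact h1 h2.2

end SplitProof

/-- If `A` is c.e. and non-computable, then there is a c.e. set
`C ⊆ A` such that every non-computable split `X ⊑ A` contains an infinite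
computable set `T` with `T ∩ C` non-computable; moreover this holds uniformly via a
computable function `g` producing, from an index `e` of a non-computable split of
`A`, an index `g e` of a total strictly increasing computable function whose range
`T ⊆ W e` is computable with `T ∩ C` non-computable. -/
theorem stmt11 (A : Set ℕ) (hA : CE A) (hAnc : ¬ IsComputableSet A) :
    ∃ C : Set ℕ, CE C ∧ C ⊆ A ∧
      (∀ X : Set ℕ, Split A X → ¬ IsComputableSet X →
        ∃ T : Set ℕ, T.Infinite ∧ IsComputableSet T ∧ T ⊆ X ∧
          ¬ IsComputableSet (T ∩ C)) ∧
      ∃ g : ℕ → ℕ, Computable g ∧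
        ∀ e : ℕ, Split A (Wset e) → ¬ IsComputableSet (Wset e) →
          ∃ b : ℕ → ℕ, (∀ x : ℕ, phiFun (g e) x = Part.some (b x)) ∧
            StrictMono b ∧ Set.range b ⊆ Wset e ∧
            IsComputableSet (Set.range b) ∧
            ¬ IsComputableSet (Set.range b ∩ C) := by
  obtain ⟨a, rfl⟩ := SplitProof.CE.index hA
  obtain ⟨g, hgc, hg⟩ := SplitProof.exists_g a
  refine ⟨SplitProof.Cset a, SplitProof.Cset_CE a, SplitProof.Cset_subset a, ?_, g, hgc,
    fun e hs hnc => SplitProof.main hg hs hnc⟩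
  intro X hX hnc
  obtain ⟨e, rfl⟩ := SplitProof.CE.index hX.1
  obtain ⟨b, -, hmono, hsub, hcomp, hnc'⟩ := SplitProof.main hg hX hnc
  exact ⟨Set.range b, Set.infinite_range_of_injective hmono.injective, hcomp, hsub, hnc'⟩
end

section
/- Let A, D ⊆ ℕ be c.e. with D ⊂ₘ A. Let I be a collection of splits of A such that: I is nonempty; if X, Y ∈ I then X ∪ Y ∈ I; if X ∈ I, Y ⊑ A and Y ⊆* X ∪ D then Y ∈ I; and the index set {e : Wₑ ⊑ A and Wₑ ∈ I} is Σ⁰₃ (so I is a Σ⁰₃-ideal of the boolean algebra of splits of A modulo D and finite differences). Then there is a c.e. set C with D ⊆* C ⊆* A such that for every split X ⊑ A: X ∈ I if and only if X ∩ C ⊆* D. -/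
/-- A set `P ⊆ ℕ` is `Σ⁰₃` if there is a computable relation `R ⊆ ℕ⁴` such that
`n ∈ P ↔ ∃ a ∀ b ∃ c, R n a b c`. -/
def Sigma03 (P : Set ℕ) : Prop :=
  ∃ R : ℕ → ℕ → ℕ → ℕ → Prop,
    ComputablePred (fun t : ℕ × ℕ × ℕ × ℕ => R t.1 t.2.1 t.2.2.1 t.2.2.2) ∧
    ∀ n : ℕ, n ∈ P ↔ ∃ a : ℕ, ∀ b : ℕ, ∃ c : ℕ, R n a b c


/-! ### Closure properties of r.e. predicates -/

section RE
variable {α β : Type*} [Primcodable α] [Primcodable β]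

theorem re_comp {p : β → Prop} (hp : REPred p) {f : α → β} (hf : Computable f) :
    REPred fun a => p (f a) := Partrec.comp hp hf

theorem re_dom_iff {p : α → Prop} : REPred p ↔ ∃ f : α →. Unit, Partrec f ∧ ∀ a, p a ↔ (f a).Dom := by
  constructor
  · intro h
    exact ⟨_, h, fun a => by simp [Part.assert]⟩
  · rintro ⟨f, hf, h⟩
    exact hf.dom_re.of_eq fun a => (h a).symm

theorem re_and {p q : α → Prop} (hp : REPred p) (hq : REPred q) :
    REPred fun a => p a ∧ q a := by
  have h : Partrec fun a => (Part.assert (p a) fun _ => Part.some ()).bind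
      fun _ => Part.assert (q a) fun _ => Part.some () :=
    Partrec.bind hp (Partrec.comp hq Computable.fst).to₂
  refine h.dom_re.of_eq fun a => ?_
  simp [Part.assert]

/-- The reduction principle for r.e. predicates. -/
theorem re_reduction {p q : α → Prop} (hp : REPred p) (hq : REPred q) :
    ∃ p' q' : α → Prop, REPred p' ∧ REPred q' ∧ (∀ a, p' a → p a) ∧ (∀ a, q' a → q a) ∧
      (∀ a, p' a → q' a → False) ∧ (∀ a, p a ∨ q a → p' a ∨ q' a) := by
  have hf : Partrec fun a => (Part.assert (p a) fun _ => Part.some ()).map fun _ => true :=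
    Partrec.map hp (Computable.const true).to₂
  have hg : Partrec fun a => (Part.assert (q a) fun _ => Part.some ()).map fun _ => false :=
    Partrec.map hq (Computable.const false).to₂
  obtain ⟨k, hk, H⟩ := Partrec.merge' hf hg
  have key : ∀ b : Bool, REPred fun a => b ∈ k a := by
    intro b
    have h : Partrec fun a => (k a).bind fun c => bif (c == b) then Part.some () else Part.none := by
      have hc : Computable fun z : α × Bool => (z.2 == b) :=
        (Primrec.beq.comp Primrec.snd (Primrec.const b)).to_comp
      have hc2 : Partrec fun z : α × Bool =>
          bif (z.2 == b) then Part.some () else Part.none :=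
        Partrec.cond hc (Computable.const ()).partrec Partrec.none
      exact Partrec.bind hk hc2.to₂
    refine h.dom_re.of_eq fun a => ?_
    rw [Part.dom_iff_mem]
    constructor
    · rintro ⟨y, hy⟩
      obtain ⟨c, hc, hy⟩ := Part.mem_bind_iff.1 hy
      by_cases hcb : c = b
      · exact hcb ▸ hc
      · have : (c == b) = false := by simpa using hcb
        rw [this] at hy
        exact absurd hy (Part.notMem_none _)
    · intro hb
      refine ⟨(), Part.mem_bind_iff.2 ⟨b, hb, ?_⟩⟩
      simp
  refine ⟨_, _, key true, key false, ?_, ?_, ?_, ?_⟩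
  · intro a h
    rcases (H a).1 _ h with h | h <;> simp at h
    exact h
  · intro a h
    rcases (H a).1 _ h with h | h <;> simp at h
    exact h
  · intro a h h'
    exact absurd (Part.mem_unique h h') (by simp)
  · intro a h
    have hd : (k a).Dom := (H a).2.2 (by simpa [Part.assert] using h)
    obtain ⟨b, hb⟩ := Part.dom_iff_mem.1 hd
    cases b
    · exact Or.inr hb
    · exact Or.inl hb

theorem re_or {p q : α → Prop} (hp : REPred p) (hq : REPred q) :
    REPred fun a => p a ∨ q a := by
  obtain ⟨k, hk, H⟩ := Partrec.merge' hp hq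
  refine hk.dom_re.of_eq fun a => ?_
  rw [(H a).2]
  simp [Part.assert]

/-- Stagewise enumeration of an r.e. predicate. -/
theorem re_stage {p : α → Prop} (hp : REPred p) :
    ∃ v : α → ℕ → Bool, Computable₂ v ∧ (∀ a s t, s ≤ t → v a s = true → v a t = true) ∧
      (∀ a s, v a s = true → Encodable.encode a < s) ∧ ∀ a, p a ↔ ∃ s, v a s = true := by
  obtain ⟨c, hc⟩ := Nat.Partrec.Code.exists_code.1 hp
  refine ⟨fun a s => (Nat.Partrec.Code.evaln s c (Encodable.encode a)).isSome, ?_, ?_, ?_, ?_⟩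
  · refine Primrec.to_comp (Primrec.option_isSome.comp ?_)
    exact Nat.Partrec.Code.primrec_evaln.comp
      ((Primrec.snd.pair (Primrec.const c)).pair (Primrec.encode.comp Primrec.fst))
  · intro a s t hst h
    obtain ⟨y, hy⟩ := Option.isSome_iff_exists.1 h
    exact Option.isSome_iff_exists.2 ⟨y, Nat.Partrec.Code.evaln_mono hst hy⟩
  · intro a s h
    obtain ⟨y, hy⟩ := Option.isSome_iff_exists.1 h
    exact Nat.Partrec.Code.evaln_bound hy
  · intro a
    have h1 : p a ↔ (c.eval (Encodable.encode a)).Dom := by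
      rw [hc]
      simp [Part.assert]
    rw [h1, Part.dom_iff_mem]
    constructor
    · rintro ⟨y, hy⟩
      obtain ⟨s, hs⟩ := Nat.Partrec.Code.evaln_complete.1 hy
      exact ⟨s, Option.isSome_iff_exists.2 ⟨y, hs⟩⟩
    · rintro ⟨s, hs⟩
      obtain ⟨y, hy⟩ := Option.isSome_iff_exists.1 hs
      exact ⟨y, Nat.Partrec.Code.evaln_sound hy⟩

theorem re_of_computable {v : α → Bool} (hv : Computable v) : REPred fun a => v a = true :=
  (ComputablePred.computable_iff.2 ⟨v, hv, rfl⟩).to_re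

theorem re_of_exists {v : α → ℕ → Bool} (hv : Computable₂ v) :
    REPred fun a => ∃ s, v a s = true := by
  have h : Partrec fun a => Nat.rfind fun s => Part.some (v a s) :=
    Partrec.rfind (Computable.partrec hv).to₂
  refine h.dom_re.of_eq fun a => ?_
  refine Nat.rfind_dom'.trans ?_
  constructor
  · rintro ⟨n, hn, -⟩
    exact ⟨n, (Part.mem_some_iff.1 hn).symm⟩
  · rintro ⟨n, hn⟩
    exact ⟨n, Part.mem_some_iff.2 hn.symm, fun _ => trivial⟩

theorem re_exists {p : α × ℕ → Prop} (hp : REPred p) : REPred fun a => ∃ n, p (a, n) := by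
  obtain ⟨v, hv, -, -, h⟩ := re_stage hp
  have h2 : Computable₂ fun (a : α) (m : ℕ) => v (a, m.unpair.1) m.unpair.2 := by
    have hu : Computable fun x : α × ℕ => x.2.unpair := Primrec.unpair.to_comp.comp Computable.snd
    exact hv.comp (Computable.fst.pair (Computable.fst.comp hu)) (Computable.snd.comp hu)
  refine (re_of_exists h2).of_eq fun a => ?_
  constructor
  · rintro ⟨m, hm⟩
    exact ⟨_, (h _).2 ⟨_, hm⟩⟩
  · rintro ⟨n, hn⟩
    obtain ⟨s, hs⟩ := (h _).1 hn
    exact ⟨Nat.pair n s, by simpa using hs⟩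

theorem re_ball {p : α × ℕ → Prop} (hp : REPred p) :
    REPred fun x : α × ℕ => ∀ y < x.2, p (x.1, y) := by
  have h : Partrec fun x : α × ℕ => (Nat.rec (Part.some ()) (fun y IH => IH.bind fun _ =>
      Part.assert (p (x.1, y)) fun _ => Part.some ()) x.2 : Part Unit) := by
    have h0 : Partrec fun w : (α × ℕ) × (ℕ × Unit) =>
        Part.assert (p (w.1.1, w.2.1)) fun _ => Part.some () :=
      Partrec.comp hp ((Computable.fst.comp Computable.fst).pair
        (Computable.fst.comp Computable.snd))
    exact Partrec.nat_rec (h := fun (x : α × ℕ) (z : ℕ × Unit) =>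
      Part.assert (p (x.1, z.1)) fun _ => Part.some ()) Computable.snd
      (Computable.const ()).partrec h0.to₂
  refine h.dom_re.of_eq ?_
  rintro ⟨a, n⟩
  induction n with
  | zero => simp
  | succ n ih =>
    simp only at ih ⊢
    rw [Nat.forall_lt_succ_right, ← ih]
    simp [Part.assert]

end RE

theorem ce_iff {A : Set ℕ} : CE A ↔ REPred fun x => x ∈ A := by
  constructor
  · rintro ⟨f, hf, rfl⟩
    exact hf.dom_re
  · intro h
    refine ⟨_, Partrec.map h (Computable.const (0 : ℕ)).to₂, ?_⟩
    ext x
    simp [PFun.Dom, Part.assert]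

theorem ce_index {A : Set ℕ} (h : CE A) : ∃ e, Wset e = A := by
  obtain ⟨f, hf, rfl⟩ := h
  obtain ⟨c, hc⟩ := Nat.Partrec.Code.exists_code.1 (Partrec.nat_iff.1 hf)
  exact ⟨Encodable.encode c, by simp [Wset, phiFun, hc]⟩

theorem re_Wset : REPred fun x : ℕ × ℕ => x.2 ∈ Wset x.1 := by
  have h : Partrec fun x : ℕ × ℕ => (Denumerable.ofNat Nat.Partrec.Code x.1).eval x.2 :=
    Nat.Partrec.Code.eval_part.comp
      ((Computable.ofNat Nat.Partrec.Code).comp Computable.fst) Computable.snd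
  exact h.dom_re

theorem re_le : REPred fun z : ℕ × ℕ => z.1 ≤ z.2 := by
  have h : PrimrecPred fun z : ℕ × ℕ => z.1 ≤ z.2 := Primrec.nat_le
  exact h.computablePred.to_re

theorem ce_finite_union {X F : Set ℕ} (hX : CE X) (hF : F.Finite) : CE (X ∪ F) := by
  have : REPred fun x => x ∈ F := by
    classical
    induction F, hF using Set.Finite.induction_on with
    | empty => exact (re_of_computable (Computable.const false)).of_eq fun a => by simp
    | @insert a F _ _ ih =>
      have h1 : REPred fun x : ℕ => (x == a) = true :=
        re_of_computable (Primrec.beq.comp Primrec.id (Primrec.const a)).to_comp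
      exact (re_or h1 ih).of_eq fun x => by simp
  exact ce_iff.2 (re_or (ce_iff.1 hX) this)

/-- Nonuniform picking: for uniformly c.e. `V j`, subsets `C j` with `C j \ D` finite, nonempty
if `V j \ D` is. -/
theorem thin {D : Set ℕ} (hD : CE D) {V : ℕ × ℕ → Prop} (hV : REPred V) :
    ∃ K : ℕ × ℕ → Prop, REPred K ∧ (∀ z, K z → V z) ∧
      (∀ j, {x | K (j, x) ∧ x ∉ D}.Finite) ∧
      ∀ j, (∃ x, V (j, x) ∧ x ∉ D) → ∃ x, K (j, x) ∧ x ∉ D := by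
  classical
  obtain ⟨v, hv, mono, bdd, hiff⟩ := re_stage hV
  refine ⟨fun z => ∃ s, v z s = true ∧ ∀ y < z.2, (!v (z.1, y) s) = true ∨ y ∈ D, ?_, ?_, ?_, ?_⟩
  · have h1 : REPred fun w : (ℕ × ℕ) × ℕ => (!v (w.1.1, w.2) w.1.2) = true ∨ w.2 ∈ D := by
      refine re_or (re_of_computable ?_) (re_comp (ce_iff.1 hD) Computable.snd)
      exact Primrec.not.to_comp.comp (hv.comp
        ((Computable.fst.comp Computable.fst).pair Computable.snd)
        (Computable.snd.comp Computable.fst))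
    have h2 : REPred fun w : (ℕ × ℕ) × ℕ => ∀ y < w.1.2, (!v (w.1.1, y) w.2) = true ∨ y ∈ D :=
      re_comp (re_ball h1) (f := fun w : (ℕ × ℕ) × ℕ => ((w.1.1, w.2), w.1.2))
        (((Computable.fst.comp Computable.fst).pair Computable.snd).pair
          (Computable.snd.comp Computable.fst))
    exact re_exists (p := fun w : (ℕ × ℕ) × ℕ =>
      v w.1 w.2 = true ∧ ∀ y < w.1.2, (!v (w.1.1, y) w.2) = true ∨ y ∈ D)
      (re_and (re_of_computable hv) h2)
  · rintro z ⟨s, hs, -⟩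
    exact (hiff z).2 ⟨s, hs⟩
  · intro j
    by_cases hj : ∃ x, V (j, x) ∧ x ∉ D
    · obtain ⟨x, hx, hxD⟩ := hj
      obtain ⟨t, ht⟩ := (hiff _).1 hx
      refine (Set.finite_le_nat (max x t)).subset ?_
      rintro z ⟨⟨s, hs, hall⟩, hzD⟩
      simp only [Set.mem_ofPred_eq, le_max_iff]
      by_contra! hcon
      rcases hall x hcon.1 with h | h
      · have hst : s < t := by
          by_contra! hle
          rw [mono _ _ _ hle ht] at h
          simp at h
        have hb : Nat.pair j z < s := bdd _ _ hs
        have := Nat.right_le_pair j z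
        omega
      · exact hxD h
    · push Not at hj
      refine Set.Finite.subset Set.finite_empty ?_
      rintro z ⟨⟨s, hs, -⟩, hzD⟩
      exact hzD (hj z ((hiff _).2 ⟨s, hs⟩))
  · intro j hj
    obtain ⟨hx, hxD⟩ := Nat.find_spec hj
    obtain ⟨s, hs⟩ := (hiff _).1 hx
    refine ⟨Nat.find hj, ⟨s, hs, fun y hy => ?_⟩, hxD⟩
    have := Nat.find_min hj hy
    by_cases hyV : v (j, y) s = true
    · right
      by_contra hyD
      exact this ⟨(hiff _).2 ⟨s, hyV⟩, hyD⟩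
    · left
      simpa using hyV

/-- A uniformly c.e. sequence of splits generating the ideal. -/
theorem generators (A D : Set ℕ) (hA : CE A) (hmajor : MajorSubset D A)
    (I : Set (Set ℕ))
    (hsplits : ∀ X ∈ I, Split A X)
    (hne : I.Nonempty)
    (hdown : ∀ X ∈ I, ∀ Y : Set ℕ, Split A Y → SubsetStar Y (X ∪ D) → Y ∈ I)
    (hindex : Sigma03 {e : ℕ | Split A (Wset e) ∧ Wset e ∈ I}) :
    ∃ P Q : ℕ × ℕ → Prop, REPred Q ∧ (∀ z, P z → Q z → False) ∧ (∀ z, Q z → z.2 ∈ A) ∧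
      (∀ n, {x | P (n, x)} ∈ I) ∧ (∀ n, {x | x ∈ A ∧ ¬ P (n, x) ∧ ¬ Q (n, x)}.Finite) ∧
      ∀ X ∈ I, ∃ n, SubsetStar X ({x | P (n, x)} ∪ D) := by
  classical
  obtain ⟨R, hR, hRi⟩ := hindex
  have hA' := ce_iff.1 hA
  obtain ⟨va, hva, -, -, ha⟩ := re_stage hA'
  have cE : Computable fun n : ℕ => n.unpair.1 := Computable.fst.comp Primrec.unpair.to_comp
  have cS : Computable fun n : ℕ => n.unpair.2 := Computable.snd.comp Primrec.unpair.to_comp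
  have cI : Computable fun n : ℕ => n.unpair.2.unpair.1 := cE.comp cS
  have cA : Computable fun n : ℕ => n.unpair.2.unpair.2 := cS.comp cS
  -- the matrix of the guess
  let M : ℕ × ℕ → Prop := fun z =>
    (∃ c, R z.1.unpair.1 z.1.unpair.2.unpair.2 z.2.unpair.1 c) ∧
    ((!va z.2.unpair.2.unpair.1 z.2.unpair.2.unpair.2) = true ∨
      (z.2.unpair.2.unpair.1 ∈ Wset z.1.unpair.1 ∨
        z.2.unpair.2.unpair.1 ∈ Wset z.1.unpair.2.unpair.1))
  have hM : REPred M := by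
    refine re_and ?_ (re_or ?_ (re_or ?_ ?_))
    · refine re_exists (p := fun w : (ℕ × ℕ) × ℕ =>
        R w.1.1.unpair.1 w.1.1.unpair.2.unpair.2 w.1.2.unpair.1 w.2) ?_
      have c1 : Computable fun w : (ℕ × ℕ) × ℕ => w.1.1 := Computable.fst.comp Computable.fst
      have c2 : Computable fun w : (ℕ × ℕ) × ℕ => w.1.2 := Computable.snd.comp Computable.fst
      exact re_comp hR.to_re (f := fun w : (ℕ × ℕ) × ℕ =>
        (w.1.1.unpair.1, w.1.1.unpair.2.unpair.2, w.1.2.unpair.1, w.2))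
        ((cE.comp c1).pair ((cA.comp c1).pair ((cE.comp c2).pair Computable.snd)))
    · refine re_of_computable ?_
      exact Primrec.not.to_comp.comp (hva.comp (cI.comp Computable.snd) (cA.comp Computable.snd))
    · exact re_comp re_Wset (f := fun z : ℕ × ℕ => (z.1.unpair.1, z.2.unpair.2.unpair.1))
        ((cE.comp Computable.fst).pair (cI.comp Computable.snd))
    · exact re_comp re_Wset
        (f := fun z : ℕ × ℕ => (z.1.unpair.2.unpair.1, z.2.unpair.2.unpair.1))
        ((cI.comp Computable.fst).pair (cI.comp Computable.snd))
  have hF : REPred fun z : ℕ × ℕ => ∀ b < z.2, M (z.1, b) := re_ball hM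
  have hA2 : REPred fun z : ℕ × ℕ => z.2 ∈ A := re_comp hA' Computable.snd
  obtain ⟨G, H, hG, hH, GF, HA, GH, FAGH⟩ := re_reduction hF hA2
  have hWe : REPred fun z : ℕ × ℕ => z.2 ∈ Wset z.1.unpair.1 :=
    re_comp re_Wset (f := fun z : ℕ × ℕ => (z.1.unpair.1, z.2))
      ((cE.comp Computable.fst).pair Computable.snd)
  have hWi : REPred fun z : ℕ × ℕ => z.2 ∈ Wset z.1.unpair.2.unpair.1 :=
    re_comp re_Wset (f := fun z : ℕ × ℕ => (z.1.unpair.2.unpair.1, z.2))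
      ((cI.comp Computable.fst).pair Computable.snd)
  obtain ⟨E, J, hE, hJ, EW, JW, EJ, WEJ⟩ := re_reduction hWe hWi
  let P : ℕ × ℕ → Prop := fun z => (G z ∧ z.2 ∈ A) ∧ E z
  let Q : ℕ × ℕ → Prop := fun z => H z ∨ ((G z ∧ z.2 ∈ A) ∧ J z)
  have hP : REPred P := re_and (re_and hG hA2) hE
  have hQ : REPred Q := re_or hH (re_and (re_and hG hA2) hJ)
  have PQ : ∀ z, P z → Q z → False := by
    rintro z ⟨⟨hg, -⟩, he⟩ (h | ⟨-, hj⟩)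
    · exact GH z hg h
    · exact EJ z he hj
  have QA : ∀ z, Q z → z.2 ∈ A := by
    rintro z (h | h)
    · exact HA z h
    · exact h.1.2
  -- false guesses give finite sets
  have falseFin : ∀ n, (∃ b, ¬ M (n, b)) → {x | G (n, x)}.Finite := by
    rintro n ⟨b, hb⟩
    refine (Set.finite_le_nat b).subset fun x hx => ?_
    by_contra hlt
    exact hb (GF _ hx b (by simpa using hlt))
  have rest : ∀ n, {x | x ∈ A ∧ ¬ P (n, x) ∧ ¬ Q (n, x)}.Finite := by
    intro n
    by_cases hn : ∃ b, ¬ M (n, b)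
    · refine (falseFin n hn).subset ?_
      rintro x ⟨hxA, -, hq⟩
      rcases FAGH (n, x) (Or.inr hxA) with h | h
      · exact h
      · exact absurd (Or.inl h) hq
    · push Not at hn
      refine Set.finite_empty.subset ?_
      rintro x ⟨hxA, hp, hq⟩
      obtain ⟨s, hs⟩ := (ha x).1 hxA
      have h1 := (hn (Nat.pair 0 (Nat.pair x s))).2
      simp only [Nat.unpair_pair, hs] at h1
      have h2 : x ∈ Wset n.unpair.1 ∨ x ∈ Wset n.unpair.2.unpair.1 := by simpa using h1
      rcases FAGH (n, x) (Or.inr hxA) with h | h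
      · rcases WEJ (n, x) h2 with h' | h'
        · exact hp ⟨⟨h, hxA⟩, h'⟩
        · exact hq (Or.inr ⟨⟨h, hxA⟩, h'⟩)
      · exact hq (Or.inl h)
  have split : ∀ n, Split A {x | P (n, x)} := by
    intro n
    have cn : Computable fun x : ℕ => (n, x) := (Computable.const n).pair Computable.id
    refine ⟨ce_iff.2 (re_comp hP cn), {x | Q (n, x)} ∪ {x | x ∈ A ∧ ¬ P (n, x) ∧ ¬ Q (n, x)},
      ce_finite_union (ce_iff.2 (re_comp hQ cn)) (rest n), ?_, ?_⟩
    · ext x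
      simp only [Set.mem_inter_iff, Set.mem_union, Set.mem_ofPred_eq, Set.mem_empty_iff_false,
        iff_false]
      rintro ⟨hp, hq | hq⟩
      · exact PQ _ hp hq
      · exact hq.2.1 hp
    · ext x
      simp only [Set.mem_union, Set.mem_ofPred_eq]
      constructor
      · rintro (h | h | h)
        · exact h.1.2
        · exact QA _ h
        · exact h.1
      · intro hx
        tauto
  refine ⟨P, Q, hQ, PQ, QA, ?_, rest, ?_⟩
  · intro n
    by_cases hn : ∃ b, ¬ M (n, b)
    · obtain ⟨X, hX⟩ := hne
      refine hdown X hX _ (split n) ?_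
      exact (falseFin n hn).subset fun x hx => hx.1.1.1
    · push Not at hn
      have hmem : n.unpair.1 ∈ {e : ℕ | Split A (Wset e) ∧ Wset e ∈ I} := by
        refine (hRi _).2 ⟨n.unpair.2.unpair.2, fun b => ?_⟩
        have := (hn (Nat.pair b 0)).1
        simpa using this
      refine hdown _ hmem.2 _ (split n) ?_
      refine Set.finite_empty.subset ?_
      rintro x ⟨hx, hx'⟩
      exact hx' (Or.inl (EW _ hx.2))
  · intro X hX
    obtain ⟨hXce, Y, hY, hXY, hXYA⟩ := hsplits X hX
    obtain ⟨e, rfl⟩ := ce_index hXce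
    obtain ⟨i, rfl⟩ := ce_index hY
    obtain ⟨a, haR⟩ := (hRi e).1 ⟨hsplits _ hX, hX⟩
    let n := Nat.pair e (Nat.pair i a)
    have hn : ∀ b, M (n, b) := by
      intro b
      refine ⟨by simpa [n] using haR b.unpair.1, ?_⟩
      by_cases hb : va b.unpair.2.unpair.1 b.unpair.2.unpair.2 = true
      · right
        have hbA : b.unpair.2.unpair.1 ∈ A := (ha _).2 ⟨_, hb⟩
        rw [← hXYA] at hbA
        simpa [n] using hbA
      · left
        simpa using hb
    have cn : Computable fun x : ℕ => (n, x) := (Computable.const n).pair Computable.id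
    have hmaj := hmajor.2.2 {x | G (n, x)} (ce_iff.2 (re_comp hG cn)) (by
      ext x
      simp only [Set.mem_union, Set.mem_ofPred_eq, Set.mem_univ, iff_true]
      rcases FAGH (n, x) (Or.inl fun b _ => hn b) with h | h
      · exact Or.inr h
      · exact Or.inl (HA _ h))
    refine ⟨n, hmaj.subset ?_⟩
    rintro x ⟨hxe, hx⟩
    refine ⟨trivial, ?_⟩
    rintro (h | h)
    · exact hx (Or.inr h)
    · refine hx (Or.inl ⟨⟨h, ?_⟩, ?_⟩)
      · show x ∈ A
        rw [← hXYA]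
        exact Or.inl hxe
      · have hWe' : x ∈ Wset n.unpair.1 := by simpa [n] using hxe
        rcases WEJ (n, x) (Or.inl hWe') with h' | h'
        · exact h'
        · exfalso
          have hxi : x ∈ Wset i := by simpa [n] using JW _ h'
          have : x ∈ Wset e ∩ Wset i := ⟨hxe, hxi⟩
          rw [hXY] at this
          exact this

/-- Let `A`, `D` be c.e. with `D ⊂ₘ A`, and let `I` be a `Σ⁰₃`-ideal
of the boolean algebra of splits of `A` modulo `D` and finite differences.  Then
there is a c.e. set `C` with `D ⊆* C ⊆* A` such that for every split `X ⊑ A`,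
`X ∈ I` iff `X ∩ C ⊆* D`. -/
theorem stmt12 (A D : Set ℕ) (hA : CE A) (hD : CE D) (hmajor : MajorSubset D A)
    (I : Set (Set ℕ))
    (hsplits : ∀ X ∈ I, Split A X)
    (hne : I.Nonempty)
    (hunion : ∀ X ∈ I, ∀ Y ∈ I, X ∪ Y ∈ I)
    (hdown : ∀ X ∈ I, ∀ Y : Set ℕ, Split A Y → SubsetStar Y (X ∪ D) → Y ∈ I)
    (hindex : Sigma03 {e : ℕ | Split A (Wset e) ∧ Wset e ∈ I}) :
    ∃ C : Set ℕ, CE C ∧ SubsetStar D C ∧ SubsetStar C A ∧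
      ∀ X : Set ℕ, Split A X → (X ∈ I ↔ SubsetStar (X ∩ C) D) := by
  obtain ⟨P, Q, hQ, PQ, QA, PI, rest, cof⟩ :=
    generators A D hA hmajor I hsplits hne hdown hindex
  have cE : Computable fun n : ℕ => n.unpair.1 := Computable.fst.comp Primrec.unpair.to_comp
  have cS : Computable fun n : ℕ => n.unpair.2 := Computable.snd.comp Primrec.unpair.to_comp
  let V : ℕ × ℕ → Prop := fun z => (z.2 ∈ Wset z.1.unpair.1 ∧ z.1.unpair.2 ≤ z.2) ∧
    ∀ n < z.1 + 1, Q (n, z.2)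
  have hV : REPred V := by
    refine re_and (re_and ?_ ?_) ?_
    · exact re_comp re_Wset (f := fun z : ℕ × ℕ => (z.1.unpair.1, z.2))
        ((cE.comp Computable.fst).pair Computable.snd)
    · exact re_comp re_le (f := fun z : ℕ × ℕ => (z.1.unpair.2, z.2))
        ((cS.comp Computable.fst).pair Computable.snd)
    · have h : REPred fun w : ℕ × ℕ => Q (w.2, w.1) :=
        re_comp hQ (f := fun w : ℕ × ℕ => (w.2, w.1)) (Computable.snd.pair Computable.fst)
      exact re_comp (re_ball h) (f := fun z : ℕ × ℕ => (z.2, z.1 + 1))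
        (Computable.snd.pair (Computable.succ.comp Computable.fst))
  obtain ⟨K, hK, KV, Kfin, Kne⟩ := thin hD hV
  have hC : REPred fun x : ℕ => ∃ j, K (j, x) :=
    re_exists (p := fun w : ℕ × ℕ => K (w.2, w.1))
      (re_comp hK (f := fun w : ℕ × ℕ => (w.2, w.1)) (Computable.snd.pair Computable.fst))
  refine ⟨D ∪ {x | ∃ j, K (j, x)}, ce_iff.2 (re_or (ce_iff.1 hD) hC), ?_, ?_, ?_⟩
  · refine Set.finite_empty.subset ?_
    rintro x ⟨h, h'⟩
    exact h' (Or.inl h)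
  · refine Set.finite_empty.subset ?_
    rintro x ⟨h | ⟨j, hj⟩, h'⟩
    · exact h' (hmajor.1 h)
    · exact h' (QA _ ((KV _ hj).2 j (Nat.lt_succ_self j)))
  · intro X hX
    constructor
    · intro hXI
      obtain ⟨n, hn⟩ := cof X hXI
      refine (hn.union ((Set.finite_lt_nat n).biUnion fun j _ => Kfin j)).subset ?_
      rintro x ⟨⟨hxX, hxD | ⟨j, hj⟩⟩, hxD'⟩
      · exact absurd hxD hxD'
      · by_cases hP : P (n, x)
        · right
          simp only [Set.mem_iUnion]
          refine ⟨j, ?_, hj, hxD'⟩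
          by_contra hjn
          exact PQ _ hP ((KV _ hj).2 n (Nat.lt_succ_of_le (not_lt.1 hjn)))
        · left
          refine ⟨hxX, ?_⟩
          rintro (h | h)
          · exact hP h
          · exact hxD' h
    · intro hfin
      by_contra hXI
      obtain ⟨e, rfl⟩ := ce_index hX.1
      obtain ⟨k, hk⟩ := hfin.bddAbove
      set j := Nat.pair e (k + 1) with hjdef
      have hU : ∀ m, (⋃ n ∈ Set.Iio (m + 1), {x | P (n, x)}) ∈ I := by
        intro m
        induction m with
        | zero => simpa using PI 0
        | succ m ih =>
          rw [show Set.Iio (m + 1 + 1) = Set.Iio (m + 1) ∪ {m + 1} by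
            ext y; simp, Set.biUnion_union]
          simpa using hunion _ ih _ (PI (m + 1))
      have hex : ∃ x, V (j, x) ∧ x ∉ D := by
        by_contra! hno
        refine hXI (hdown _ (hU j) _ hX ?_)
        refine (((Set.finite_lt_nat (j + 1)).biUnion fun n _ => rest n).union
          (Set.finite_le_nat k)).subset ?_
        rintro x ⟨hxe, hx⟩
        by_contra hcon
        simp only [Set.mem_union, Set.mem_iUnion, Set.mem_ofPred_eq, not_or, not_exists,
          not_and, not_not, not_le, Set.mem_Iio] at hx hcon
        refine hx.2 (hno x ⟨⟨?_, ?_⟩, fun n hn => ?_⟩)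
        · simpa [hjdef] using hxe
        · simpa [hjdef] using hcon.2
        · obtain ⟨_, Y, _, _, hXY⟩ := hX
          exact hcon.1 n hn (hXY ▸ Or.inl hxe) (hx.1 n hn)
      obtain ⟨x, hx, hxD⟩ := Kne j hex
      have hVx := KV _ hx
      have h1 : x ∈ Wset e := by simpa [hjdef] using hVx.1.1
      have h2 : k + 1 ≤ x := by simpa [hjdef] using hVx.1.2
      have h3 := hk (a := x) ⟨⟨h1, Or.inr ⟨j, hx⟩⟩, hxD⟩
      omega
end

section
/- Let A ⊆ ℕ be c.e. and non-computable, and let D be c.e. with D ⊂ₛ A and D ⊂ₘ A. Then a collection I of splits of A is a 3-acceptable ideal of B(A) if and only if there is a c.e. set C such that I = {X ⊑ A : X ∩ C ⊆* D}. -/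
/-- `I` is an ideal of the boolean algebra `B(A)` of splits of `A`: a nonempty
collection of splits of `A` closed under union and closed downward. -/
def IdealOfSplits (A : Set ℕ) (I : Set (Set ℕ)) : Prop :=
  (∀ X ∈ I, Split A X) ∧ I.Nonempty ∧
    (∀ X ∈ I, ∀ Y ∈ I, X ∪ Y ∈ I) ∧
    (∀ X ∈ I, ∀ Y : Set ℕ, Split A Y → Y ⊆ X → Y ∈ I)

/-- `I` is a 3-acceptable ideal of `B(A)`: an ideal containing all computable
subsets of `A` whose index set is `Σ⁰₃`. -/
def ThreeAcceptable (A : Set ℕ) (I : Set (Set ℕ)) : Prop :=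
  IdealOfSplits A I ∧
    (∀ R : Set ℕ, IsComputableSet R → R ⊆ A → R ∈ I) ∧
    Sigma03 {e : ℕ | Wset e ∈ I}

namespace IdealDef

section lib
variable {α β : Type} [Primcodable α] [Primcodable β]

theorem dec_comp {p : β → Prop} {f : α → β} (hp : ComputablePred p) (hf : Computable f) :
    ComputablePred fun a => p (f a) := by
  obtain ⟨g, hg, rfl⟩ := ComputablePred.computable_iff.1 hp
  exact ComputablePred.computable_iff.2 ⟨_, hg.comp hf, rfl⟩

theorem dec_and {p q : α → Prop} (hp : ComputablePred p) (hq : ComputablePred q) :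
    ComputablePred fun a => p a ∧ q a := by
  obtain ⟨f, hf, rfl⟩ := ComputablePred.computable_iff.1 hp
  obtain ⟨g, hg, rfl⟩ := ComputablePred.computable_iff.1 hq
  exact ComputablePred.computable_iff.2
    ⟨fun a => f a && g a, Primrec.and.to_comp.comp hf hg, by ext a; simp⟩

theorem dec_or {p q : α → Prop} (hp : ComputablePred p) (hq : ComputablePred q) :
    ComputablePred fun a => p a ∨ q a := by
  obtain ⟨f, hf, rfl⟩ := ComputablePred.computable_iff.1 hp
  obtain ⟨g, hg, rfl⟩ := ComputablePred.computable_iff.1 hq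
  exact ComputablePred.computable_iff.2
    ⟨fun a => f a || g a, Primrec.or.to_comp.comp hf hg, by ext a; simp⟩

theorem dec_lt {f g : α → ℕ} (hf : Computable f) (hg : Computable g) :
    ComputablePred fun a => f a < g a :=
  dec_comp (p := fun q : ℕ × ℕ => q.1 < q.2) (f := fun a => (f a, g a))
    (PrimrecPred.computablePred Primrec.nat_lt) (hf.pair hg)

theorem dec_bex {P : α → ℕ → Prop} {f : α → ℕ} (hP : ComputablePred fun q : α × ℕ => P q.1 q.2)
    (hf : Computable f) : ComputablePred fun a => ∃ t < f a, P a t := by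
  obtain ⟨g, hg, h⟩ := ComputablePred.computable_iff.1 hP
  have h' : ∀ a t, P a t ↔ g (a, t) = true := fun a t => iff_of_eq (congrFun h (a, t))
  refine ComputablePred.computable_iff.2
    ⟨fun a => Nat.rec (motive := fun _ => Bool) false (fun y IH => IH || g (a, y)) (f a), ?_, ?_⟩
  · refine Computable.nat_rec (h := fun a q => q.2 || g (a, q.1)) hf (Computable.const false) ?_
    exact Primrec.or.to_comp.comp (Computable.snd.comp Computable.snd)
      (hg.comp (Computable.fst.pair (Computable.fst.comp Computable.snd)))
  · ext a
    show _ ↔ Nat.rec (motive := fun _ => Bool) false (fun y IH => IH || g (a, y)) (f a) = true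
    induction f a with
    | zero => simp
    | succ n ih =>
      have : (∃ t < n + 1, P a t) ↔ (∃ t < n, P a t) ∨ P a n := by
        constructor
        · rintro ⟨t, ht, hp⟩
          rcases Nat.lt_succ_iff_lt_or_eq.1 ht with h | rfl
          · exact Or.inl ⟨t, h, hp⟩
          · exact Or.inr hp
        · rintro (⟨t, ht, hp⟩ | hp)
          · exact ⟨t, by omega, hp⟩
          · exact ⟨n, by omega, hp⟩
      rw [this, ih, h']
      simp

theorem dec_ball {P : α → ℕ → Prop} {f : α → ℕ} (hP : ComputablePred fun q : α × ℕ => P q.1 q.2)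
    (hf : Computable f) : ComputablePred fun a => ∀ t < f a, P a t :=
  (dec_bex (P := fun a t => ¬ P a t) hP.not hf).not.of_eq fun a => by push Not; rfl

/-- Semidecidable predicates with a monotone computable stage relation. -/
def Semi (P : α → Prop) : Prop :=
  ∃ R : α → ℕ → Prop, ComputablePred (fun q : α × ℕ => R q.1 q.2) ∧
    (∀ a s t, s ≤ t → R a s → R a t) ∧ ∀ a, P a ↔ ∃ s, R a s

theorem Semi.mk {P : α → Prop} {R : α → ℕ → Prop}
    (hR : ComputablePred (fun q : α × ℕ => R q.1 q.2)) (h : ∀ a, P a ↔ ∃ s, R a s) : Semi P := by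
  refine ⟨fun a s => ∃ t < s, R a t, ?_, ?_, ?_⟩
  · refine dec_bex (P := fun (q : α × ℕ) t => R q.1 t) (f := fun q : α × ℕ => q.2) ?_ Computable.snd
    exact dec_comp (f := fun q : (α × ℕ) × ℕ => (q.1.1, q.2)) hR
      ((Computable.fst.comp Computable.fst).pair Computable.snd)
  · rintro a s t hst ⟨u, hu, hr⟩
    exact ⟨u, by omega, hr⟩
  · intro a
    rw [h]
    exact ⟨fun ⟨s, hs⟩ => ⟨s + 1, s, by omega, hs⟩, fun ⟨_, t, _, ht⟩ => ⟨t, ht⟩⟩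

theorem Semi.of_iff {P Q : α → Prop} (h : Semi P) (H : ∀ a, Q a ↔ P a) : Semi Q :=
  (funext fun a => propext (H a) : Q = P) ▸ h

theorem Semi.of_dec {P : α → Prop} (h : ComputablePred P) : Semi P :=
  Semi.mk (R := fun a _ => P a) (dec_comp (f := fun q : α × ℕ => q.1) h Computable.fst) (by simp)

theorem Semi.comp {P : β → Prop} {f : α → β} (hP : Semi P) (hf : Computable f) :
    Semi fun a => P (f a) := by
  obtain ⟨R, hR, _, h⟩ := hP
  refine Semi.mk (R := fun a s => R (f a) s) ?_ fun a => h (f a)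
  exact dec_comp (f := fun q : α × ℕ => (f q.1, q.2)) hR
      ((hf.comp Computable.fst).pair Computable.snd)

theorem Semi.and {P Q : α → Prop} (hP : Semi P) (hQ : Semi Q) : Semi fun a => P a ∧ Q a := by
  obtain ⟨R, hR, mR, h⟩ := hP
  obtain ⟨S, hS, mS, h'⟩ := hQ
  refine Semi.mk (R := fun a s => R a s ∧ S a s) (dec_and hR hS) fun a => ?_
  rw [h, h']
  constructor
  · rintro ⟨⟨s, hs⟩, t, ht⟩
    exact ⟨max s t, mR _ _ _ (le_max_left _ _) hs, mS _ _ _ (le_max_right _ _) ht⟩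
  · rintro ⟨s, hs, ht⟩
    exact ⟨⟨s, hs⟩, s, ht⟩

theorem Semi.or {P Q : α → Prop} (hP : Semi P) (hQ : Semi Q) : Semi fun a => P a ∨ Q a := by
  obtain ⟨R, hR, mR, h⟩ := hP
  obtain ⟨S, hS, mS, h'⟩ := hQ
  refine Semi.mk (R := fun a s => R a s ∨ S a s) (dec_or hR hS) fun a => ?_
  rw [h, h', exists_or]

theorem Semi.ex {P : α → ℕ → Prop} (hP : Semi fun q : α × ℕ => P q.1 q.2) :
    Semi fun a => ∃ n, P a n := by
  obtain ⟨R, hR, mR, h⟩ := hP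
  refine Semi.mk (R := fun a s => R (a, s.unpair.1) s.unpair.2) ?_ fun a => ?_
  · have hu : Computable fun q : α × ℕ => q.2.unpair :=
      Primrec.unpair.to_comp.comp Computable.snd
    exact dec_comp (f := fun q : α × ℕ => ((q.1, q.2.unpair.1), q.2.unpair.2)) hR
      ((Computable.fst.pair (Computable.fst.comp hu)).pair (Computable.snd.comp hu))
  · constructor
    · rintro ⟨n, hn⟩
      obtain ⟨s, hs⟩ := (h (a, n)).1 hn
      exact ⟨Nat.pair n s, by simpa using hs⟩
    · rintro ⟨s, hs⟩
      exact ⟨_, (h (a, s.unpair.1)).2 ⟨_, hs⟩⟩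

theorem Semi.ball {P : α → ℕ → Prop} {f : α → ℕ} (hP : Semi fun q : α × ℕ => P q.1 q.2)
    (hf : Computable f) : Semi fun a => ∀ t < f a, P a t := by
  obtain ⟨R, hR, mR, h⟩ := hP
  refine Semi.mk (R := fun a s => ∀ t < f a, R (a, t) s) ?_ fun a => ?_
  · refine dec_ball (P := fun (q : α × ℕ) t => R (q.1, t) q.2) (f := fun q : α × ℕ => f q.1) ?_
      (hf.comp Computable.fst)
    exact dec_comp (f := fun q : (α × ℕ) × ℕ => ((q.1.1, q.2), q.1.2)) hR
      (((Computable.fst.comp Computable.fst).pair Computable.snd).pair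
        (Computable.snd.comp Computable.fst))
  · constructor
    · intro H
      have key : ∀ n, (∀ t < n, P a t) → ∃ s, ∀ t < n, R (a, t) s := by
        intro n
        induction n with
        | zero => intro _; exact ⟨0, by simp⟩
        | succ n ih =>
          intro H
          obtain ⟨s, hs⟩ := ih fun t ht => H t (by omega)
          obtain ⟨u, hu⟩ := (h (a, n)).1 (H n (by omega))
          refine ⟨max s u, fun t ht => ?_⟩
          rcases Nat.lt_succ_iff_lt_or_eq.1 ht with h1 | rfl
          · exact mR _ _ _ (le_max_left _ _) (hs t h1)
          · exact mR _ _ _ (le_max_right _ _) hu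
      exact key _ H
    · rintro ⟨s, hs⟩ t ht
      exact (h (a, t)).2 ⟨s, hs t ht⟩

theorem Semi.iff_re {P : α → Prop} (hP : Semi P) : ∃ f : α →. ℕ, Partrec f ∧ ∀ a, P a ↔ (f a).Dom := by
  obtain ⟨R, hR, mR, h⟩ := hP
  obtain ⟨g, hg, h'⟩ := ComputablePred.computable_iff.1 hR
  have h2 : ∀ a t, R a t ↔ g (a, t) = true := fun a t => iff_of_eq (congrFun h' (a, t))
  refine ⟨fun a => Nat.rfind fun s => Part.some (g (a, s)), ?_, fun a => ?_⟩
  · exact Partrec.rfind (p := fun a s => Part.some (g (a, s))) hg.partrec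
  · rw [h]
    refine Iff.trans ?_ (Nat.rfind_dom (p := fun s => Part.some (g (a, s)))).symm
    simp [h2]

end lib

theorem semi_W : Semi fun q : ℕ × ℕ => q.2 ∈ Wset q.1 := by
  refine Semi.mk (R := fun q s =>
    (Nat.Partrec.Code.evaln s (Denumerable.ofNat Nat.Partrec.Code q.1) q.2).isSome = true) ?_ ?_
  · refine ComputablePred.computable_iff.2 ⟨_, ?_, rfl⟩
    refine Primrec.option_isSome.to_comp.comp (Nat.Partrec.Code.primrec_evaln.to_comp.comp
      (g := fun q : (ℕ × ℕ) × ℕ => ((q.2, Denumerable.ofNat Nat.Partrec.Code q.1.1), q.1.2)) ?_)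
    exact (Computable.snd.pair ((Computable.ofNat _).comp (Computable.fst.comp Computable.fst))).pair
      (Computable.snd.comp Computable.fst)
  · rintro ⟨e, x⟩
    simp only [Wset, phiFun, PFun.mem_dom, Nat.Partrec.Code.evaln_complete, Option.isSome_iff_exists]
    exact exists_comm

theorem ce_iff_W {A : Set ℕ} : CE A ↔ ∃ e, A = Wset e := by
  constructor
  · rintro ⟨f, hf, rfl⟩
    obtain ⟨c, hc⟩ := Nat.Partrec.Code.exists_code.1 (Partrec.nat_iff.1 hf)
    exact ⟨Encodable.encode c, by simp [Wset, phiFun, hc]⟩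
  · rintro ⟨e, rfl⟩
    exact ⟨phiFun e, Partrec.nat_iff.2 (Nat.Partrec.Code.exists_code.2 ⟨_, rfl⟩), rfl⟩

theorem ce_iff_semi {A : Set ℕ} : CE A ↔ Semi fun x => x ∈ A := by
  constructor
  · intro h
    obtain ⟨e, rfl⟩ := ce_iff_W.1 h
    exact semi_W.comp (f := fun x => (e, x)) ((Computable.const e).pair Computable.id)
  · intro h
    obtain ⟨f, hf, h⟩ := h.iff_re
    exact ⟨f, hf, Set.ext h⟩

theorem ce_re {A : Set ℕ} (h : CE A) : REPred fun x => x ∈ A := by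
  obtain ⟨f, hf, h⟩ := (ce_iff_semi.1 h).iff_re
  exact hf.dom_re.of_eq fun a => (h a).symm

theorem computable_of_ce {A : Set ℕ} (h : CE A) (h' : CE Aᶜ) : IsComputableSet A :=
  ComputablePred.computable_iff_re_compl_re'.2 ⟨ce_re h, ce_re h'⟩

theorem ce_union {A B : Set ℕ} (h : CE A) (h' : CE B) : CE (A ∪ B) :=
  ce_iff_semi.2 ((ce_iff_semi.1 h).or (ce_iff_semi.1 h'))

theorem ce_inter {A B : Set ℕ} (h : CE A) (h' : CE B) : CE (A ∩ B) :=
  ce_iff_semi.2 ((ce_iff_semi.1 h).and (ce_iff_semi.1 h'))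

theorem ce_of_computable {A : Set ℕ} (h : IsComputableSet A) : CE A :=
  ce_iff_semi.2 (Semi.of_dec h)

theorem split_iff {A X : Set ℕ} : Split A X ↔ CE X ∧ X ⊆ A ∧ CE (A \ X) := by
  constructor
  · rintro ⟨h, Y, hY, h1, rfl⟩
    refine ⟨h, Set.subset_union_left, ?_⟩
    rwa [Set.union_sdiff_left, sdiff_eq_left.2 (Set.disjoint_iff_inter_eq_empty.2 (by rwa [Set.inter_comm]))]
  · rintro ⟨h, h1, h2⟩
    exact ⟨h, _, h2, Set.inter_sdiff_self _ _, Set.union_sdiff_cancel h1⟩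

theorem split_union {A X Y : Set ℕ} (h : Split A X) (h' : Split A Y) : Split A (X ∪ Y) := by
  rw [split_iff] at *
  refine ⟨ce_union h.1 h'.1, Set.union_subset h.2.1 h'.2.1, ?_⟩
  rw [← Set.sdiff_inter_sdiff]
  exact ce_inter h.2.2 h'.2.2

theorem split_computable {A R : Set ℕ} (hA : CE A) (hR : IsComputableSet R) (h : R ⊆ A) :
    Split A R := by
  rw [split_iff]
  refine ⟨ce_of_computable hR, h, ?_⟩
  exact ce_inter hA (ce_of_computable hR.not)

theorem exists_pick {D : Set ℕ} (hD : CE D) {E : ℕ → ℕ → Prop}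
    (hE : Semi fun q : ℕ × ℕ => E q.1 q.2) :
    ∃ C : ℕ → ℕ → Prop, Semi (fun q : ℕ × ℕ => C q.1 q.2) ∧ (∀ p x, C p x → E p x) ∧
      (∀ p, {x | C p x ∧ x ∉ D}.Finite) ∧
      (∀ p, (∃ x, E p x ∧ x ∉ D) → ∃ x, C p x ∧ x ∉ D) := by
  obtain ⟨R, hR, mR, hRE⟩ := hE
  obtain ⟨G, hG, mG, hGD⟩ := ce_iff_semi.1 hD
  let K : ℕ → ℕ → ℕ → Prop := fun p x s => R (p, x) s ∧ ¬ G x s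
  have hK : ComputablePred fun q : ((ℕ × ℕ) × ℕ) => K q.1.1 q.1.2 q.2 := by
    refine dec_and hR (ComputablePred.not ?_)
    exact dec_comp (f := fun q : (ℕ × ℕ) × ℕ => (q.1.2, q.2)) hG
      ((Computable.snd.comp Computable.fst).pair Computable.snd)
  let M : ℕ → ℕ → ℕ → Prop := fun p x s => K p x s ∧ ∀ y < x, ¬ K p y s
  refine ⟨fun p x => ∃ s, M p x s, ?_, ?_, ?_, ?_⟩
  · refine Semi.mk (R := fun q s => M q.1 q.2 s) ?_ (fun _ => Iff.rfl)
    refine dec_and hK ?_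
    refine dec_ball (P := fun (q : (ℕ × ℕ) × ℕ) y => ¬ K q.1.1 y q.2)
      (f := fun q : (ℕ × ℕ) × ℕ => q.1.2) (ComputablePred.not ?_)
      (Computable.snd.comp Computable.fst)
    exact dec_comp (f := fun q : ((ℕ × ℕ) × ℕ) × ℕ => ((q.1.1.1, q.2), q.1.2)) hK
      (((Computable.fst.comp (Computable.fst.comp Computable.fst)).pair Computable.snd).pair
        (Computable.snd.comp Computable.fst))
  · rintro p x ⟨s, hs⟩
    exact (hRE (p, x)).2 ⟨s, hs.1.1⟩
  · intro p
    by_cases hx : ∃ x, E p x ∧ x ∉ D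
    · obtain ⟨x, hx, hxD⟩ := hx
      obtain ⟨s0, hs0⟩ := (hRE (p, x)).1 hx
      refine Set.Finite.subset ((Set.finite_le_nat x).union
        ((Set.finite_lt_nat s0).biUnion (t := fun s => {z | M p z s}) ?_)) ?_
      · intro s _
        refine Set.Subsingleton.finite ?_
        intro y hy z hz
        rcases lt_trichotomy y z with h | h | h
        · exact absurd hy.1 (hz.2 y h)
        · exact h
        · exact absurd hz.1 (hy.2 z h)
      · rintro z ⟨⟨s, hs⟩, hzD⟩
        by_cases hzx : z ≤ x
        · exact Or.inl hzx
        · refine Or.inr (Set.mem_biUnion (x := s) ?_ hs)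
          by_contra hlt
          exact hs.2 x (by omega)
            ⟨mR _ _ _ (not_lt.1 hlt) hs0, fun hg => hxD ((hGD x).2 ⟨s, hg⟩)⟩
    · refine Set.Finite.subset Set.finite_empty ?_
      rintro z ⟨⟨s, hs⟩, hzD⟩
      exact hx ⟨z, (hRE (p, z)).2 ⟨s, hs.1.1⟩, hzD⟩
  · intro p hx
    classical
    obtain ⟨hxE, hxD⟩ := Nat.find_spec hx
    have hmin : ∀ y < Nat.find hx, ¬ (E p y ∧ y ∉ D) := fun y hy => Nat.find_min hx hy
    generalize Nat.find hx = x at hxE hxD hmin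
    obtain ⟨s0, hs0⟩ := (hRE (p, x)).1 hxE
    have ev : ∀ᶠ s in Filter.atTop, ∀ y ∈ {y | y < x}, ¬ K p y s := by
      rw [Filter.eventually_all_finite (Set.finite_lt_nat x)]
      intro y hy
      by_cases hyD : y ∈ D
      · obtain ⟨t, ht⟩ := (hGD y).1 hyD
        filter_upwards [Filter.eventually_ge_atTop t] with s hs hk
        exact hk.2 (mG _ _ _ hs ht)
      · refine Filter.Eventually.of_forall fun s hk => hmin y hy ⟨(hRE (p, y)).2 ⟨s, hk.1⟩, hyD⟩
    obtain ⟨s, hs, hs'⟩ := (ev.and (Filter.eventually_ge_atTop s0)).exists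
    exact ⟨x, ⟨s, ⟨mR _ _ _ hs' hs0, fun hg => hxD ((hGD x).2 ⟨s, hg⟩)⟩, hs⟩, hxD⟩

theorem exists_S {A : Set ℕ} (hA : CE A) {Q : ℕ → ℕ → Prop}
    (hQ : Semi fun q : ℕ × ℕ => Q q.1 q.2) :
    ∃ S : ℕ → Set ℕ, (∀ n, CE (S n)) ∧ Semi (fun q : ℕ × ℕ => q.2 ∈ A ∧ q.2 ∉ S q.1) ∧
      (∀ n, (∀ b, Q n b) → A ∪ S n = Set.univ) ∧ ∀ n, ¬ (∀ b, Q n b) → (S n).Finite := by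
  have hQ' : Semi fun q : ℕ × ℕ => ∀ b < q.2 + 1, Q q.1 b := by
    refine Semi.ball (P := fun (q : ℕ × ℕ) b => Q q.1 b) ?_ (Computable.succ.comp Computable.snd)
    exact hQ.comp (f := fun q : (ℕ × ℕ) × ℕ => (q.1.1, q.2))
      ((Computable.fst.comp Computable.fst).pair Computable.snd)
  obtain ⟨T, hT, mT, hTQ⟩ := hQ'
  obtain ⟨G, hG, mG, hGA⟩ := ce_iff_semi.1 hA
  have hdec : ComputablePred fun q : (ℕ × ℕ) × ℕ => ¬ G q.1.2 q.2 ∧ T q.1 q.2 := by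
    refine dec_and (ComputablePred.not ?_) hT
    exact dec_comp (f := fun q : (ℕ × ℕ) × ℕ => (q.1.2, q.2)) hG
      ((Computable.snd.comp Computable.fst).pair Computable.snd)
  refine ⟨fun n => {x | ∃ s, ¬ G x s ∧ T (n, x) s}, ?_, ?_, ?_, ?_⟩
  · intro n
    refine ce_iff_semi.2 (Semi.comp (P := fun q : ℕ × ℕ => ∃ s, ¬ G q.2 s ∧ T q s)
      (f := fun x => (n, x)) ?_ ((Computable.const n).pair Computable.id))
    exact Semi.mk (R := fun q s => ¬ G q.2 s ∧ T q s) hdec (fun _ => Iff.rfl)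
  · refine Semi.mk (R := fun q t => G q.2 t ∧ ∀ s < t, ¬ (¬ G q.2 s ∧ T q s)) ?_ ?_
    · refine dec_and ?_ ?_
      · exact dec_comp (f := fun q : (ℕ × ℕ) × ℕ => (q.1.2, q.2)) hG
          ((Computable.snd.comp Computable.fst).pair Computable.snd)
      · refine dec_ball (P := fun (q : (ℕ × ℕ) × ℕ) s => ¬ (¬ G q.1.2 s ∧ T q.1 s))
          (f := fun q : (ℕ × ℕ) × ℕ => q.2) (ComputablePred.not ?_) Computable.snd
        exact dec_comp (f := fun q : ((ℕ × ℕ) × ℕ) × ℕ => (q.1.1, q.2)) hdec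
          ((Computable.fst.comp Computable.fst).pair Computable.snd)
    · rintro ⟨n, x⟩
      constructor
      · rintro ⟨hx, hS⟩
        obtain ⟨t, ht⟩ := (hGA x).1 hx
        exact ⟨t, ht, fun s _ h => hS ⟨s, h⟩⟩
      · rintro ⟨t, ht, h⟩
        refine ⟨(hGA x).2 ⟨t, ht⟩, ?_⟩
        rintro ⟨s, hs⟩
        refine h s ?_ hs
        by_contra hlt
        exact hs.1 (mG _ _ _ (not_lt.1 hlt) ht)
  · intro n hn
    refine Set.eq_univ_of_forall fun x => ?_
    by_cases hx : x ∈ A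
    · exact Or.inl hx
    · obtain ⟨s, hs⟩ := (hTQ (n, x)).1 fun b _ => hn b
      exact Or.inr ⟨s, fun hg => hx ((hGA x).2 ⟨s, hg⟩), hs⟩
  · intro n hn
    push Not at hn
    obtain ⟨b, hb⟩ := hn
    refine (Set.finite_lt_nat b).subset ?_
    rintro x ⟨s, _, hs⟩
    have := (hTQ (n, x)).2 ⟨s, hs⟩
    by_contra hlt
    exact hb (this b (by simp only [Set.mem_ofPred_eq] at hlt; simp only; omega))

theorem exists_Q {A : Set ℕ} (hA : CE A) {I : Set (Set ℕ)} (hsp : ∀ X ∈ I, Split A X)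
    (hI : Sigma03 {e : ℕ | Wset e ∈ I}) :
    ∃ (e i : ℕ → ℕ) (Q : ℕ → ℕ → Prop), Computable e ∧ Computable i ∧
      Semi (fun q : ℕ × ℕ => Q q.1 q.2) ∧
      (∀ n, (∀ b, Q n b) → Wset (e n) ∈ I ∧ (∀ x, x ∈ Wset (e n) → x ∈ Wset (i n) → False) ∧
        ∀ x ∈ A, x ∈ Wset (e n) ∨ x ∈ Wset (i n)) ∧
      ∀ X ∈ I, ∃ n, (∀ b, Q n b) ∧ Wset (e n) = X := by
  obtain ⟨R, hR, hRI⟩ := hI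
  obtain ⟨G, hG, mG, hGA⟩ := ce_iff_semi.1 hA
  obtain ⟨V, hV, mV, hVW⟩ := semi_W
  have c1 : Computable fun n : ℕ => n.unpair.1 := Computable.fst.comp Computable.unpair
  have c2 : Computable fun n : ℕ => n.unpair.2 := Computable.snd.comp Computable.unpair
  let e : ℕ → ℕ := fun n => n.unpair.1
  let i : ℕ → ℕ := fun n => n.unpair.2.unpair.1
  let a : ℕ → ℕ := fun n => n.unpair.2.unpair.2
  have ce : Computable e := c1
  have ci : Computable i := c1.comp c2
  have ca : Computable a := c2.comp c2
  have cf : Computable (Prod.fst : ℕ × ℕ → ℕ) := Computable.fst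
  have cs : Computable (Prod.snd : ℕ × ℕ → ℕ) := Computable.snd
  have hV' : ∀ {f : ℕ → ℕ}, Computable f →
      ComputablePred fun q : ℕ × ℕ => V (f q.1, q.2.unpair.1) q.2.unpair.2 := fun {f} hf =>
    dec_comp (f := fun q : ℕ × ℕ => ((f q.1, q.2.unpair.1), q.2.unpair.2)) hV
      (((hf.comp cf).pair (c1.comp cs)).pair (c2.comp cs))
  have hW' : ∀ {f : ℕ → ℕ}, Computable f →
      Semi fun q : ℕ × ℕ => q.2.unpair.1 ∈ Wset (f q.1) := fun {f} hf =>
    semi_W.comp (f := fun q : ℕ × ℕ => (f q.1, q.2.unpair.1)) ((hf.comp cf).pair (c1.comp cs))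
  refine ⟨e, i, fun n b => (∃ c, R (e n) (a n) b c) ∧
    ¬ (V (e n, b.unpair.1) b.unpair.2 ∧ V (i n, b.unpair.1) b.unpair.2) ∧
    (¬ G b.unpair.1 b.unpair.2 ∨ b.unpair.1 ∈ Wset (e n) ∨ b.unpair.1 ∈ Wset (i n)),
    ce, ci, ?_, ?_, ?_⟩
  · refine Semi.and ?_ (Semi.and ?_ (Semi.or ?_ (Semi.or (hW' ce) (hW' ci))))
    · refine Semi.mk (R := fun (q : ℕ × ℕ) c => R (e q.1) (a q.1) q.2 c) ?_ (fun _ => Iff.rfl)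
      refine dec_comp (f := fun q : (ℕ × ℕ) × ℕ => (e q.1.1, a q.1.1, q.1.2, q.2)) hR ?_
      have h1 : Computable fun q : (ℕ × ℕ) × ℕ => q.1 := Computable.fst
      exact (ce.comp (cf.comp h1)).pair ((ca.comp (cf.comp h1)).pair
        ((cs.comp h1).pair Computable.snd))
    · exact Semi.of_dec (dec_and (hV' ce) (hV' ci)).not
    · exact Semi.of_dec (dec_comp (f := fun q : ℕ × ℕ => (q.2.unpair.1, q.2.unpair.2)) hG
        ((c1.comp cs).pair (c2.comp cs))).not
  · intro n hn
    refine ⟨(hRI _).2 ⟨a n, fun b => (hn b).1⟩, ?_, ?_⟩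
    · intro x hx hx'
      obtain ⟨s, hs⟩ := (hVW (e n, x)).1 hx
      obtain ⟨t, ht⟩ := (hVW (i n, x)).1 hx'
      refine (hn (Nat.pair x (max s t))).2.1 ?_
      simp only [Nat.unpair_pair]
      exact ⟨mV _ _ _ (le_max_left _ _) hs, mV _ _ _ (le_max_right _ _) ht⟩
    · intro x hx
      obtain ⟨s, hs⟩ := (hGA x).1 hx
      have := (hn (Nat.pair x s)).2.2
      simp only [Nat.unpair_pair] at this
      exact this.resolve_left fun h => h hs
  · intro X hX
    obtain ⟨hXce, Y, hY, hd, hu⟩ := hsp X hX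
    obtain ⟨j, rfl⟩ := ce_iff_W.1 hXce
    obtain ⟨k, rfl⟩ := ce_iff_W.1 hY
    obtain ⟨c, hc⟩ := (hRI j).1 hX
    refine ⟨Nat.pair j (Nat.pair k c), fun b => ?_, by simp [e]⟩
    simp only [e, i, a, Nat.unpair_pair]
    refine ⟨hc b, ?_, ?_⟩
    · rintro ⟨h1, h2⟩
      have : b.unpair.1 ∈ Wset j ∩ Wset k := ⟨(hVW (j, _)).2 ⟨_, h1⟩, (hVW (k, _)).2 ⟨_, h2⟩⟩
      rw [hd] at this
      exact this
    · by_cases h : G b.unpair.1 b.unpair.2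
      · right
        have : b.unpair.1 ∈ A := (hGA _).2 ⟨_, h⟩
        rw [← hu] at this
        exact this
      · exact Or.inl h

theorem forward {A D : Set ℕ} (hA : CE A) (hD : CE D)
    (hsmall : SmallSubset D A) (hmajor : MajorSubset D A) {I : Set (Set ℕ)}
    (hI : ThreeAcceptable A I) :
    ∃ C : Set ℕ, CE C ∧ I = {X : Set ℕ | Split A X ∧ SubsetStar (X ∩ C) D} := by
  obtain ⟨⟨hsp, -, hun, hdown⟩, hcomp, hS3⟩ := hI
  obtain ⟨e, i, Q, ce, ci, hQ, htrue, hlist⟩ := exists_Q hA hsp hS3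
  obtain ⟨S, hSce, hSn, hSt, hSf⟩ := exists_S hA hQ
  have hempty : (∅ : Set ℕ) ∈ I := by
    refine hcomp ∅ ?_ (Set.empty_subset _)
    exact ComputablePred.computable_iff.2 ⟨fun _ => false, Computable.const false, by ext; simp⟩
  have c1 : Computable fun n : ℕ => n.unpair.1 := Computable.fst.comp Computable.unpair
  have cf : Computable (Prod.fst : ℕ × ℕ → ℕ) := Computable.fst
  have cs : Computable (Prod.snd : ℕ × ℕ → ℕ) := Computable.snd
  let E : ℕ → ℕ → Prop := fun p x => ¬ x < p ∧ x ∈ Wset p.unpair.1 ∧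
    ∀ n < p, (x ∈ A ∧ x ∉ S n) ∨ x ∈ Wset (i n)
  have hE : Semi fun q : ℕ × ℕ => E q.1 q.2 := by
    refine Semi.and (Semi.of_dec (dec_lt cs cf).not) (Semi.and ?_ ?_)
    · exact semi_W.comp (f := fun q : ℕ × ℕ => (q.1.unpair.1, q.2)) ((c1.comp cf).pair cs)
    · refine Semi.ball (P := fun (q : ℕ × ℕ) n => (q.2 ∈ A ∧ q.2 ∉ S n) ∨ q.2 ∈ Wset (i n)) ?_ cf
      have h1 : Computable fun q : (ℕ × ℕ) × ℕ => q.1 := Computable.fst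
      have h2 : Computable fun q : (ℕ × ℕ) × ℕ => q.2 := Computable.snd
      refine Semi.or ?_ ?_
      · exact hSn.comp (f := fun q : (ℕ × ℕ) × ℕ => (q.2, q.1.2)) (h2.pair (cs.comp h1))
      · exact semi_W.comp (f := fun q : (ℕ × ℕ) × ℕ => (i q.2, q.1.2))
          ((ci.comp h2).pair (cs.comp h1))
  obtain ⟨C, hC, hCE, hCfin, hCex⟩ := exists_pick hD hE
  refine ⟨{x | ∃ p, C p x}, ?_, ?_⟩
  · exact ce_iff_semi.2 (Semi.ex (P := fun x p => C p x)
      (hC.comp (f := fun q : ℕ × ℕ => (q.2, q.1)) (cs.pair cf)))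
  · ext X
    constructor
    · intro hX
      refine ⟨hsp X hX, ?_⟩
      obtain ⟨n, hn, rfl⟩ := hlist X hX
      obtain ⟨-, hdis, -⟩ := htrue n hn
      refine Set.Finite.subset ((hmajor.2.2 (S n) (hSce n) (hSt n hn)).union
        ((Set.finite_le_nat n).biUnion (t := fun p => {x | C p x ∧ x ∉ D})
          (fun p _ => hCfin p))) ?_
      rintro x ⟨⟨hxX, p, hp⟩, hxD⟩
      by_cases hpn : p ≤ n
      · exact Or.inr (Set.mem_biUnion (x := p) hpn ⟨hp, hxD⟩)
      · left
        refine ⟨trivial, ?_⟩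
        rintro (h | h)
        · exact hxD h
        · rcases (hCE p x hp).2.2 n (by omega) with h' | h'
          · exact h'.2 h
          · exact hdis x hxX h'
    · rintro ⟨hX, hfin⟩
      obtain ⟨j, hj⟩ := ce_iff_W.1 hX.1
      obtain ⟨m, hm⟩ := hfin.bddAbove
      let p := Nat.pair j (m + 1)
      have hpm : m < p := Nat.right_le_pair j (m + 1)
      have hEp : ∀ x, E p x → x ∈ D := by
        by_contra hcon
        push Not at hcon
        obtain ⟨x, hx, hxD⟩ := hCex p hcon
        have hxE := hCE p x hx
        have hxX : x ∈ X := by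
          have := hxE.2.1
          simp only [p, Nat.unpair_pair] at this
          rwa [hj]
        have h1 : x ≤ m := hm ⟨⟨hxX, p, hx⟩, hxD⟩
        have h2 := hxE.1
        omega
      let U : ℕ → Set ℕ := fun q => {x | ∃ n < q, (∀ b, Q n b) ∧ x ∈ Wset (e n)}
      have hU : ∀ q, U q ∈ I := by
        intro q
        induction q with
        | zero =>
          have : U 0 = ∅ := by ext x; simp [U]
          rwa [this]
        | succ q ih =>
          by_cases hq : ∀ b, Q q b
          · have : U (q + 1) = U q ∪ Wset (e q) := by
              ext x
              constructor
              · rintro ⟨n, hn, h1, h2⟩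
                rcases Nat.lt_succ_iff_lt_or_eq.1 hn with h | rfl
                · exact Or.inl ⟨n, h, h1, h2⟩
                · exact Or.inr h2
              · rintro (⟨n, hn, h⟩ | h)
                · exact ⟨n, by omega, h⟩
                · exact ⟨q, by omega, hq, h⟩
            rw [this]
            exact hun _ ih _ (htrue q hq).1
          · have : U (q + 1) = U q := by
              ext x
              constructor
              · rintro ⟨n, hn, h1, h2⟩
                rcases Nat.lt_succ_iff_lt_or_eq.1 hn with h | rfl
                · exact ⟨n, h, h1, h2⟩
                · exact absurd h1 hq
              · rintro ⟨n, hn, h⟩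
                exact ⟨n, by omega, h⟩
            rwa [this]
      have hY : Split A (A \ X) := by
        have h := split_iff.1 hX
        refine split_iff.2 ⟨h.2.2, Set.sdiff_subset, ?_⟩
        rw [Set.sdiff_sdiff_cancel_left h.2.1]
        exact h.1
      have hV := split_iff.1 (split_union hY (hsp _ (hU p)))
      have hstar : SubsetStar (Set.univ ∩ (A \ D)) ((A \ X) ∪ U p) := by
        refine Set.Finite.subset ((Set.finite_lt_nat p).union
          ((Set.Finite.subset (Set.finite_lt_nat p) (t := {n | n < p ∧ ¬ ∀ b, Q n b})
            (fun n hn => hn.1)).biUnion (t := S) (fun n hn => hSf n hn.2))) ?_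
        rintro x ⟨⟨-, hxA, hxD⟩, hxV⟩
        by_contra hcon
        refine hxD (hEp x ⟨fun h => hcon (Or.inl h), ?_, fun n hn => ?_⟩)
        · simp only [p, Nat.unpair_pair]
          rw [← hj]
          by_contra hxX
          exact hxV (Or.inl ⟨hxA, hxX⟩)
        · by_cases hq : ∀ b, Q n b
          · right
            refine ((htrue n hq).2.2 x hxA).resolve_left fun h => hxV (Or.inr ⟨n, hn, hq, h⟩)
          · left
            exact ⟨hxA, fun h => hcon (Or.inr (Set.mem_biUnion (x := n) ⟨hn, hq⟩ h))⟩
      have huniv : CE Set.univ := ce_of_computable (A := Set.univ)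
        (ComputablePred.computable_iff.2 ⟨fun _ => true, Computable.const true, by ext; simp⟩)
      have hco := hsmall.2 Set.univ _ huniv hV.1 hstar
      have hZ : A \ ((A \ X) ∪ U p) ∈ I := by
        refine hcomp _ (computable_of_ce hV.2.2 ?_) Set.sdiff_subset
        convert hco using 1
        ext x
        simp only [Set.mem_compl_iff, Set.mem_sdiff, Set.mem_union, Set.mem_univ]
        tauto
      refine hdown _ (hun _ hZ _ (hU p)) X hX ?_
      intro x hx
      have hxA := (split_iff.1 hX).2.1 hx
      by_cases h : x ∈ U p
      · exact Or.inr h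
      · exact Or.inl ⟨hxA, by rintro (h' | h'); exacts [h'.2 hx, h h']⟩

theorem backward {A D C : Set ℕ} (hA : CE A) (hD : CE D) (hC : CE C)
    (hmajor : MajorSubset D A) :
    ThreeAcceptable A {X : Set ℕ | Split A X ∧ SubsetStar (X ∩ C) D} := by
  have hcomp : ∀ R : Set ℕ, IsComputableSet R → R ⊆ A →
      R ∈ {X : Set ℕ | Split A X ∧ SubsetStar (X ∩ C) D} := by
    intro R hR hRA
    refine ⟨split_computable hA hR hRA, ?_⟩
    have hRc : CE Rᶜ := ce_of_computable (A := Rᶜ) hR.not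
    refine (hmajor.2.2 Rᶜ hRc ?_).subset ?_
    · refine Set.eq_univ_of_forall fun x => ?_
      by_cases hx : x ∈ R
      · exact Or.inl (hRA hx)
      · exact Or.inr hx
    · rintro x ⟨⟨hx, -⟩, hxD⟩
      exact ⟨trivial, by rintro (h | h); exacts [hxD h, h hx]⟩
  refine ⟨⟨fun X hX => hX.1, ?_, ?_, ?_⟩, hcomp, ?_⟩
  · refine ⟨∅, hcomp ∅ ?_ (Set.empty_subset _)⟩
    exact ComputablePred.computable_iff.2 ⟨fun _ => false, Computable.const false, by ext; simp⟩
  · rintro X ⟨hX, hX'⟩ Y ⟨hY, hY'⟩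
    refine ⟨split_union hX hY, (Set.Finite.union hX' hY').subset ?_⟩
    rintro x ⟨⟨h | h, h1⟩, h2⟩
    · exact Or.inl ⟨⟨h, h1⟩, h2⟩
    · exact Or.inr ⟨⟨h, h1⟩, h2⟩
  · rintro X ⟨hX, hX'⟩ Y hY hYX
    refine ⟨hY, Set.Finite.subset hX' ?_⟩
    rintro x ⟨⟨h, h1⟩, h2⟩
    exact ⟨⟨hYX h, h1⟩, h2⟩
  · obtain ⟨G, hG, mG, hGA⟩ := ce_iff_semi.1 hA
    obtain ⟨K, hK, mK, hKC⟩ := ce_iff_semi.1 hC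
    obtain ⟨V, hV, mV, hVW⟩ := semi_W
    have c1 : Computable fun n : ℕ => n.unpair.1 := Computable.fst.comp Computable.unpair
    have c2 : Computable fun n : ℕ => n.unpair.2 := Computable.snd.comp Computable.unpair
    -- a triple is `(e, a, b)` with `a = ⟨i, N⟩` and `b = ⟨x, t⟩`
    have ce : Computable fun q : ℕ × ℕ × ℕ => q.1 := Computable.fst
    have ca : Computable fun q : ℕ × ℕ × ℕ => q.2.1 := Computable.fst.comp Computable.snd
    have cb : Computable fun q : ℕ × ℕ × ℕ => q.2.2 := Computable.snd.comp Computable.snd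
    have ci := c1.comp ca
    have cN := c2.comp ca
    have cx := c1.comp cb
    have ct := c2.comp cb
    have hV' : ∀ {f : ℕ × ℕ × ℕ → ℕ}, Computable f →
        ComputablePred fun q => V (f q, q.2.2.unpair.1) q.2.2.unpair.2 := fun {f} hf =>
      dec_comp (f := fun q : ℕ × ℕ × ℕ => ((f q, q.2.2.unpair.1), q.2.2.unpair.2)) hV
        ((hf.pair cx).pair ct)
    have hW' : ∀ {f : ℕ × ℕ × ℕ → ℕ}, Computable f →
        Semi fun q => q.2.2.unpair.1 ∈ Wset (f q) := fun {f} hf =>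
      semi_W.comp (f := fun q : ℕ × ℕ × ℕ => (f q, q.2.2.unpair.1)) (hf.pair cx)
    have hA' : Semi fun q : ℕ × ℕ × ℕ => q.2.2.unpair.1 ∈ A := (ce_iff_semi.1 hA).comp cx
    have hD' : Semi fun q : ℕ × ℕ × ℕ => q.2.2.unpair.1 ∈ D := (ce_iff_semi.1 hD).comp cx
    have hG' : ComputablePred fun q : ℕ × ℕ × ℕ => G q.2.2.unpair.1 q.2.2.unpair.2 :=
      dec_comp (f := fun q : ℕ × ℕ × ℕ => (q.2.2.unpair.1, q.2.2.unpair.2)) hG (cx.pair ct)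
    have hK' : ComputablePred fun q : ℕ × ℕ × ℕ => K q.2.2.unpair.1 q.2.2.unpair.2 :=
      dec_comp (f := fun q : ℕ × ℕ × ℕ => (q.2.2.unpair.1, q.2.2.unpair.2)) hK (cx.pair ct)
    have big := ((Semi.of_dec (dec_and (hV' ce) (hV' ci)).not).and
      ((Semi.of_dec hG'.not).or ((hW' ce).or (hW' ci)))).and
      ((((Semi.of_dec (hV' ce).not).or hA').and ((Semi.of_dec (hV' ci).not).or hA')).and
        (((Semi.of_dec (dec_lt cx cN)).or
          (Semi.of_dec (dec_and (hV' ce) hK').not)).or hD'))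
    obtain ⟨R, hR, -, hRP⟩ := big
    refine ⟨fun e a b c => R (e, a, b) c, ?_, ?_⟩
    · refine dec_comp (f := fun q : ℕ × ℕ × ℕ × ℕ => ((q.1, q.2.1, q.2.2.1), q.2.2.2)) hR ?_
      have d1 : Computable fun q : ℕ × ℕ × ℕ × ℕ => q.1 := Computable.fst
      have d2 : Computable fun q : ℕ × ℕ × ℕ × ℕ => q.2 := Computable.snd
      exact (d1.pair ((ce.comp d2).pair (ca.comp d2))).pair (cb.comp d2)
    · intro e
      simp only [← hRP]
      constructor
      · rintro ⟨⟨-, Y, hY, hd, hu⟩, hfin⟩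
        obtain ⟨k, rfl⟩ := ce_iff_W.1 hY
        obtain ⟨m, hm⟩ := hfin.bddAbove
        refine ⟨Nat.pair k (m + 1), fun b => ?_⟩
        simp only [Nat.unpair_pair]
        generalize b.unpair.1 = x
        generalize b.unpair.2 = t
        have he : V (e, x) t → x ∈ Wset e := fun h => (hVW (e, x)).2 ⟨t, h⟩
        have hk : V (k, x) t → x ∈ Wset k := fun h => (hVW (k, x)).2 ⟨t, h⟩
        have hAu : x ∈ A ↔ x ∈ Wset e ∨ x ∈ Wset k := by rw [← hu]; rfl
        have hdx : ¬ (x ∈ Wset e ∧ x ∈ Wset k) := by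
          intro h
          have h' : x ∈ Wset e ∩ Wset k := h
          rw [hd] at h'
          exact h'
        have hGx : G x t → x ∈ A := fun h => (hGA x).2 ⟨t, h⟩
        have hKx : K x t → x ∈ C := fun h => (hKC x).2 ⟨t, h⟩
        have hlast : x < m + 1 ∨ ¬ (x ∈ Wset e ∧ x ∈ C) ∨ x ∈ D := by
          by_contra hcon
          push Not at hcon
          have : x ≤ m := hm ⟨hcon.2.1, hcon.2.2⟩
          omega
        refine ⟨⟨fun h => hdx ⟨he h.1, hk h.2⟩,
          (Classical.em _).symm.imp_right fun h => hAu.1 (hGx h)⟩,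
          ⟨(Classical.em _).symm.imp_right fun h => hAu.2 (Or.inl (he h)),
          (Classical.em _).symm.imp_right fun h => hAu.2 (Or.inr (hk h))⟩, ?_⟩
        rcases hlast with h | h | h
        · exact Or.inl (Or.inl h)
        · exact Or.inl (Or.inr fun h' => h ⟨he h'.1, hKx h'.2⟩)
        · exact Or.inr h
      · rintro ⟨a, H⟩
        have H' := fun x t => H (Nat.pair x t)
        simp only [Nat.unpair_pair] at H'
        generalize a.unpair.1 = k at H'
        generalize a.unpair.2 = N at H'
        refine ⟨⟨ce_iff_W.2 ⟨e, rfl⟩, Wset k, ce_iff_W.2 ⟨k, rfl⟩, ?_, ?_⟩, ?_⟩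
        · refine Set.eq_empty_of_forall_notMem ?_
          rintro x ⟨hx, hx'⟩
          obtain ⟨s, hs⟩ := (hVW (e, x)).1 hx
          obtain ⟨t, ht⟩ := (hVW (k, x)).1 hx'
          exact (H' x (max s t)).1.1
            ⟨mV _ _ _ (le_max_left _ _) hs, mV _ _ _ (le_max_right _ _) ht⟩
        · ext x
          constructor
          · rintro (hx | hx)
            · obtain ⟨s, hs⟩ := (hVW (e, x)).1 hx
              exact (H' x s).2.1.1.resolve_left fun h => h hs
            · obtain ⟨s, hs⟩ := (hVW (k, x)).1 hx
              exact (H' x s).2.1.2.resolve_left fun h => h hs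
          · intro hx
            obtain ⟨s, hs⟩ := (hGA x).1 hx
            exact (H' x s).1.2.resolve_left fun h => h hs
        · refine (Set.finite_lt_nat N).subset ?_
          rintro x ⟨⟨hx, hxC⟩, hxD⟩
          obtain ⟨s, hs⟩ := (hVW (e, x)).1 hx
          obtain ⟨t, ht⟩ := (hKC x).1 hxC
          rcases (H' x (max s t)).2.2 with (h | h) | h
          · exact h
          · exact absurd
              ⟨mV _ _ _ (le_max_left _ _) hs, mK _ _ _ (le_max_right _ _) ht⟩ h
          · exact absurd h hxD

end IdealDef

/-- Let `A` be c.e. and non-computable and let `D` be c.e. with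
`D ⊂ₛ A` and `D ⊂ₘ A`.  Then a collection `I` of splits of `A` is a 3-acceptable
ideal of `B(A)` iff there is a c.e. set `C` with `I = {X ⊑ A : X ∩ C ⊆* D}`. -/
theorem stmt13 (A D : Set ℕ) (hA : CE A) (hAnc : ¬ IsComputableSet A) (hD : CE D)
    (hsmall : SmallSubset D A) (hmajor : MajorSubset D A) (I : Set (Set ℕ)) :
    ThreeAcceptable A I ↔
      ∃ C : Set ℕ, CE C ∧ I = {X : Set ℕ | Split A X ∧ SubsetStar (X ∩ C) D} := by
  constructor
  · exact fun h => IdealDef.forward hA hD hsmall hmajor h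
  · rintro ⟨C, hC, rfl⟩
    exact IdealDef.backward hA hD hC hmajor
end
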